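/- (Littlewood's reduction formula) Let k ≥ 2 and λ ⊢ kp. If core_k(λ) ≠ ∅ then χ^λ_{kμ} = 0 for every μ ⊢ p. If core_k(λ) = ∅ with quot_k(λ) = (λ_1,…,λ_k), then for every partition μ ⊢ p: χ^λ_{kμ} = sign(π_λ) · Σ (z_μ/(z_{μ_1}···z_{μ_k})) · ∏_{i=1}^k χ^{λ_i}_{μ_i}, where the sum is over all k-tuples (μ_1,…,μ_k) of partitions with μ_i ⊢ |λ_i| for all i and μ_1 ⊕ … ⊕ μ_k = μ. -/

import Mathlib

open scoped BigOperators

namespace RimHookPaper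

/-- A partition: a weakly decreasing, eventually-zero sequence of naturals;
`parts n` is the `(n+1)`-st part. -/
structure Partition : Type where
  parts : ℕ → ℕ
  antitone : ∀ ⦃i j : ℕ⦄, i ≤ j → parts j ≤ parts i
  eventually_zero : ∃ N : ℕ, ∀ i : ℕ, N ≤ i → parts i = 0

namespace Partition

/-- The size `|λ|` of a partition. -/
noncomputable def size (P : Partition) : ℕ := ∑ᶠ i, P.parts i

/-- The empty partition. -/
def empty : Partition := ⟨fun _ => 0, fun _ _ _ => le_rfl, ⟨0, fun _ _ => rfl⟩⟩

/-- The number of nonzero parts of a partition. -/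
noncomputable def length (P : Partition) : ℕ := sInf {N | P.parts N = 0}

/-- The cells of the Young diagram of a partition. -/
def cells (P : Partition) : Set (ℕ × ℕ) := {c | c.2 < P.parts c.1}

instance : LE Partition := ⟨fun Q P => ∀ i, Q.parts i ≤ P.parts i⟩

/-- The skew shape `P / Q` (as a set of cells). -/
def skew (P Q : Partition) : Set (ℕ × ℕ) := P.cells \ Q.cells

end Partition

/-- Edge-adjacency of cells. -/
def Adj (c d : ℕ × ℕ) : Prop :=
  (c.1 = d.1 ∧ (c.2 + 1 = d.2 ∨ d.2 + 1 = c.2)) ∨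
    (c.2 = d.2 ∧ (c.1 + 1 = d.1 ∨ d.1 + 1 = c.1))

/-- A set of cells is (edge-)connected. -/
def IsConnectedSet (S : Set (ℕ × ℕ)) : Prop :=
  ∀ c ∈ S, ∀ d ∈ S, Relation.ReflTransGen (fun x y => x ∈ S ∧ y ∈ S ∧ Adj x y) c d

/-- `S` contains no 2×2 square. -/
def NoSquare (S : Set (ℕ × ℕ)) : Prop :=
  ¬ ∃ i j : ℕ, (i, j) ∈ S ∧ (i + 1, j) ∈ S ∧ (i, j + 1) ∈ S ∧ (i + 1, j + 1) ∈ S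

/-- `P / Q` is a rim hook (border strip) of length `t`: a nonempty connected skew
shape with no 2×2 square, consisting of `t` boxes. -/
def IsRimHook (P Q : Partition) (t : ℕ) : Prop :=
  Q ≤ P ∧ (P.skew Q).Nonempty ∧ IsConnectedSet (P.skew Q) ∧ NoSquare (P.skew Q) ∧
    (P.skew Q).ncard = t

/-- One step of a rim hook tableau: an empty hook (`t = 0`) or a rim hook of length `t`. -/
def IsStep (P Q : Partition) (t : ℕ) : Prop :=
  (t = 0 ∧ P = Q) ∨ (0 < t ∧ IsRimHook P Q t)

/-- Number of rows met by a set of cells. -/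
noncomputable def rowCount (S : Set (ℕ × ℕ)) : ℕ := (Prod.fst '' S).ncard

/-- A rim hook tableau of shape `P` and type `μ`: a chain
`∅ = λ⁰ ⊆ λ¹ ⊆ ⋯ ⊆ λʳ = P` with each `λⁱ/λⁱ⁻¹` a (possibly empty)
rim hook of length `μᵢ`. -/
structure RHT (P : Partition) (μ : List ℕ) : Type where
  chain : Fin (μ.length + 1) → Partition
  chain_zero : chain 0 = Partition.empty
  chain_last : chain (Fin.last μ.length) = P
  step : ∀ j : Fin μ.length, IsStep (chain j.succ) (chain j.castSucc) (μ.get j)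

/-- The total height of a rim hook tableau: the sum of the heights
(number of rows minus one) of its nonempty rim hooks. -/
noncomputable def RHT.height {P : Partition} {μ : List ℕ} (T : RHT P μ) : ℕ :=
  ∑ j : Fin μ.length, (rowCount ((T.chain j.succ).skew (T.chain j.castSucc)) - 1)

/-- The character value `χ^λ_μ` of the symmetric group, via the
Murnaghan–Nakayama rule. -/
noncomputable def chiAux (P : Partition) (μ : List ℕ) : ℤ :=
  ∑ᶠ T : RHT P μ, (-1 : ℤ) ^ T.height

/-- The parts of a multiset, listed in weakly decreasing order. -/
def typeList (μ : Multiset ℕ) : List ℕ := (μ.sort (· ≤ ·)).reverse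

/-- `χ^λ_μ` for a multiset type `μ`. -/
noncomputable def chi (P : Partition) (μ : Multiset ℕ) : ℤ := chiAux P (typeList μ)

/-- `z_μ = ∏_j m_j! · j^{m_j}` where `μ` has `m_j` parts equal to `j`. -/
def zpart (μ : Multiset ℕ) : ℕ := μ.prod * ∏ j ∈ μ.toFinset, (μ.count j).factorial

/-- `χ^λ(σ)`: the character evaluated at a permutation, via its full cycle type
(including fixed points as parts equal to 1). -/
noncomputable def chiPerm (P : Partition) {m : ℕ} (σ : Equiv.Perm (Fin m)) : ℤ :=
  chi P (σ.cycleType + Multiset.replicate (m - σ.cycleType.sum) 1)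

/-- Position of the zero (up step) corresponding to row `n` in the 0/1 sequence
`s(P)`, where the median of `s(P)` is the gap just below position `0`. -/
def zpos (P : Partition) (n : ℕ) : ℤ := (P.parts n : ℤ) - (n : ℤ) - 1

/-- `s(P)` has a `0` (an up step) at position `x`; otherwise it has a `1`. -/
def isZeroAt (P : Partition) (x : ℤ) : Prop := ∃ n : ℕ, zpos P n = x

/-- `Q` is the `k`-quotient of `P`: for each residue `i`, the 0/1 sequence of `Q i`
is (up to the shift `d` recording the position of its median) the subsequence of
`s(P)` consisting of every `k`-th digit, including the `(i+1)`-st digit after the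
median of `s(P)`. -/
def IsKQuotient (k : ℕ) (P : Partition) (Q : Fin k → Partition) : Prop :=
  ∀ i : Fin k, ∃ d : ℤ, ∀ j : ℤ,
    isZeroAt (Q i) j ↔ isZeroAt P (((i : ℕ) : ℤ) + (j + d) * (k : ℤ))

/-- `C` is the `k`-core of `P`: it is obtained from `P` by successively removing
rim hooks of length `k`, as long as possible. -/
def IsKCore (k : ℕ) (P C : Partition) : Prop :=
  Relation.ReflTransGen (fun A B => IsRimHook A B k) P C ∧ ¬ ∃ C', IsRimHook C C' k

/-- The map on row indices induced by moving the zero in row `m` down (left)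
to row `m'`, the zeros in rows `m+1,…,m'` each moving up one row. -/
def cycleFun (m m' n : ℕ) : ℕ :=
  if n = m then m' else if m < n ∧ n ≤ m' then n - 1 else n

/-- One tracking step for the zero permutation: passing from `A` to `B` by removing
a rim hook, encoded on the 0/1 sequence as interchanging a `1` with a later `0`
(the moved zero, in row `m` of `A`, jumps over `m' - m` zeros, landing in row `m'`
of `B`); the row of each labeled zero is updated by `cycleFun m m'`. -/
def StepTrack (A B : Partition) (f g : ℕ → ℕ) : Prop :=
  (A = B ∧ g = f) ∨
    ∃ m m' : ℕ, m ≤ m' ∧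
      (∀ n, n < m → zpos B n = zpos A n) ∧
      (∀ n, m ≤ n → n < m' → zpos B n = zpos A (n + 1)) ∧
      (∀ n, m' < n → zpos B n = zpos A n) ∧
      g = fun i => cycleFun m m' (f i)

/-- `π` is the zero permutation of the rim hook tableau `T`: label the zeros of
`s(P)` succeeding the first one by `1,…,ℓ(P)` from left to right (`q j i` is the
row of label `i+1` at stage `j` of the peeling, rows counted from the top), peel
the rim hooks of `T` in order of decreasing entries, and read off the labels in
the final sequence `s(∅)` from left to right. -/
def IsZeroPerm {P : Partition} {μ : List ℕ} (T : RHT P μ)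
    (π : Equiv.Perm (Fin P.length)) : Prop :=
  ∃ q : Fin (μ.length + 1) → ℕ → ℕ,
    (∀ i : ℕ, i < P.length → q (Fin.last μ.length) i = P.length - 1 - i) ∧
    (∀ j : Fin μ.length,
      StepTrack (T.chain j.succ) (T.chain j.castSucc) (q j.succ) (q j.castSucc)) ∧
    (∀ i : Fin P.length, q 0 ((π i : ℕ)) = P.length - 1 - (i : ℕ))

/-- `ω(T) = (T₁,…,T_k)`: the rim hook tableau `T` (all of whose hook lengths are
divisible by `k`) decomposes into the `k`-tuple of rim hook tableaux `Ti` on the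
`k`-quotient: each step of `T`, removing a hook of length `k·t`, affects exactly
one subsequence (mod `k`) of the 0/1 sequence, i.e. removes a hook of length `t`
from exactly one of the quotient partitions. -/
def OmegaRel (k : ℕ) {P : Partition} {κ : List ℕ} (T : RHT P κ)
    {Q : Fin k → Partition} {ν : Fin k → List ℕ}
    (Ti : ∀ i : Fin k, RHT (Q i) (ν i)) : Prop :=
  ∃ (QC : Fin (κ.length + 1) → Fin k → Partition) (a : Fin κ.length → Fin k),
    (∀ j, IsKQuotient k (T.chain j) (QC j)) ∧
    (∀ j : Fin κ.length, ∀ i, i ≠ a j → QC j.castSucc i = QC j.succ i) ∧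
    (∀ j : Fin κ.length, ∃ t : ℕ, κ.get j = k * t ∧
      IsStep (QC j.succ (a j)) (QC j.castSucc (a j)) t) ∧
    (∀ i : Fin k, ∃ e : Fin (ν i).length → Fin κ.length,
      StrictMono e ∧ (∀ s, a (e s) = i) ∧ (∀ j, a j = i → ∃ s, e s = j) ∧
      (∀ s, k * (ν i).get s = κ.get (e s)) ∧
      (Ti i).chain 0 = QC 0 i ∧
      (∀ s : Fin (ν i).length, (Ti i).chain s.succ = QC (Fin.succ (e s)) i))

/-!
The zeros of the 0/1 sequence of a partition form a Maya diagram, and removing a rim hook of length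
`t` moves a zero from some `x` to a free position `x - t`; its height is the number of zeros passed.
So the Murnaghan–Nakayama rule is a recursion on Maya diagrams. If `t` is a multiple of `k`, the
move stays on one runner (residue class modulo `k`), and its sign is the sign of the corresponding
move on the runner times the ratio of the signs of the permutations sorting the zeros by runner,
before and after. These ratios telescope, which leaves a global sign and a recursion on the
`k`-tuple of runners, that is, on the `k`-quotient. Unfolding it distributes the parts of `μ`
over the runners, and `z_μ / ∏ z_{μᵢ}` is the number of ways to do so.

For the type `(k^p)` every move has height zero on its runner, so the same telescoping shows that
the global sign is `(-1)` to the height of a rim hook tableau of this type. This is also the sign of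
its zero permutation, since a hook of height `h` acts on the labels as a cycle of length `h + 1`.
-/

namespace Partition

@[ext]
theorem ext {P R : Partition} (h : ∀ n, P.parts n = R.parts n) : P = R := by
  cases P; cases R; congr; exact funext h

theorem parts_eq_zero_iff (P : Partition) {n : ℕ} : P.parts n = 0 ↔ P.length ≤ n := by
  refine ⟨fun h => Nat.sInf_le h, fun h => ?_⟩
  have h₀ : P.parts P.length = 0 :=
    Nat.sInf_mem (s := {N | P.parts N = 0}) (P.eventually_zero.imp fun N hN => hN N le_rfl)
  exact Nat.eq_zero_of_le_zero (h₀ ▸ P.antitone h)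

theorem length_le_length {P R : Partition} (h : R ≤ P) : R.length ≤ P.length :=
  R.parts_eq_zero_iff.1 (Nat.eq_zero_of_le_zero (P.parts_eq_zero_iff.2 le_rfl ▸ h P.length))

theorem mem_skew {P R : Partition} {i j : ℕ} :
    (i, j) ∈ P.skew R ↔ R.parts i ≤ j ∧ j < P.parts i := by
  simp only [skew, cells, Set.mem_sdiff, Set.mem_ofPred_eq, not_lt, and_comm]

theorem size_empty : empty.size = 0 := finsum_zero

theorem size_eq_sum_range {P : Partition} {N : ℕ} (hN : ∀ n ≥ N, P.parts n = 0) :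
    P.size = ∑ n ∈ Finset.range N, P.parts n :=
  finsum_eq_sum_of_support_subset _ fun n hn => by
    by_contra h
    exact hn (hN n (by simpa using h))

theorem ncard_skew {P R : Partition} {N : ℕ} (hN : ∀ n ≥ N, P.parts n = 0) :
    (P.skew R).ncard = ∑ n ∈ Finset.range N, (P.parts n - R.parts n) := by
  have h : P.skew R = (((Finset.range N).sigma fun n => Finset.Ico (R.parts n) (P.parts n)).map
      (Equiv.sigmaEquivProd ℕ ℕ).toEmbedding : Finset (ℕ × ℕ)) := by
    ext ⟨i, j⟩
    have := hN i
    simp only [mem_skew, Finset.coe_map, Set.mem_image, Finset.mem_coe, Finset.mem_sigma,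
      Finset.mem_range, Finset.mem_Ico, Sigma.exists, Equiv.coe_toEmbedding,
      Equiv.sigmaEquivProd_apply, Prod.mk.injEq, exists_eq_right_right, exists_eq_right]
    omega
  rw [h, Set.ncard_coe_finset, Finset.card_map, Finset.card_sigma]
  simp only [Nat.card_Ico]

theorem ncard_skew_add_size {P R : Partition} (h : R ≤ P) :
    (P.skew R).ncard + R.size = P.size := by
  obtain ⟨N, hP⟩ := P.eventually_zero
  have hR : ∀ n ≥ N, R.parts n = 0 := fun n hn => Nat.eq_zero_of_le_zero (hP n hn ▸ h n)
  rw [ncard_skew hP, size_eq_sum_range hP, size_eq_sum_range hR, ← Finset.sum_add_distrib]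
  exact Finset.sum_congr rfl fun n _ => Nat.sub_add_cancel (h n)

end Partition

theorem zpos_strictAnti (P : Partition) : StrictAnti (zpos P) :=
  strictAnti_nat_of_succ_lt fun n => by
    have := P.antitone (Nat.le_add_right n 1)
    simp only [zpos]
    omega

theorem zpos_injective : Function.Injective zpos := fun P R h => by
  ext n
  have := congrFun h n
  simp only [zpos] at this
  omega

theorem zpos_empty (n : ℕ) : zpos Partition.empty n = -n - 1 := by
  simp [zpos, Partition.empty]

theorem eventually_zpos_eq (P : Partition) : ∃ N : ℕ, ∀ n ≥ N, zpos P n = -n - 1 :=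
  P.eventually_zero.imp fun N hN n hn => by simp [zpos, hN n hn]

theorem exists_zpos_eq {f : ℕ → ℤ} (hf : StrictAnti f) {N : ℕ} (hN : ∀ n ≥ N, f n = -n - 1) :
    ∃ P, zpos P = f := by
  have hanti : Antitone fun n : ℕ => f n + n + 1 := antitone_nat_of_succ_le fun n => by
    have := hf (Nat.lt_add_one n)
    push_cast
    omega
  have hnonneg (n : ℕ) : 0 ≤ f n + n + 1 := by
    refine le_of_eq_of_le ?_ (hanti (le_max_left n N))
    simp only [hN _ (le_max_right n N)]
    ring
  refine ⟨⟨fun n => (f n + n + 1).toNat, fun i j hij => Int.toNat_le_toNat (hanti hij), N,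
    fun i hi => by simp only [hN i hi]; omega⟩, funext fun n => ?_⟩
  simp only [zpos, Int.toNat_of_nonneg (hnonneg n)]
  ring

/-- The 0/1 sequence of `R` arises from that of `P` by moving the zero of row `m` of `P` to the
left, where it becomes the zero of row `m'` of `R`; the zeros it passes, in rows `m + 1, …, m'`
of `P`, move up by one row each. -/
structure IsRowShift (P R : Partition) (m m' : ℕ) : Prop where
  le : m ≤ m'
  above : ∀ n < m, zpos R n = zpos P n
  between : ∀ n, m ≤ n → n < m' → zpos R n = zpos P (n + 1)
  below : ∀ n, m' < n → zpos R n = zpos P n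
  lt : zpos R m' < zpos P m

namespace IsRowShift

variable {P R : Partition} {m m' : ℕ}

theorem zpos_succ_lt (h : IsRowShift P R m m') {n : ℕ} (hn : n < m') :
    zpos R m' < zpos P (n + 1) := by
  rcases lt_or_ge n m with hm | hm
  · exact h.lt.trans_le ((zpos_strictAnti P).antitone hm)
  · exact h.between n hm hn ▸ zpos_strictAnti R hn

theorem zpos_lt (h : IsRowShift P R m m') {n : ℕ} (hm : m ≤ n) (hm' : n ≤ m') :
    zpos R n < zpos P n := by
  rcases hm'.lt_or_eq with hn | rfl
  · exact h.between n hm hn ▸ zpos_strictAnti P (Nat.lt_add_one n)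
  · rcases hm.eq_or_lt with rfl | hn
    · exact h.lt
    · obtain ⟨n, rfl⟩ := Nat.exists_eq_add_of_lt hn
      exact h.zpos_succ_lt (Nat.lt_add_one _)

theorem zpos_eq (h : IsRowShift P R m m') {n : ℕ} (hn : n < m ∨ m' < n) :
    zpos R n = zpos P n :=
  hn.elim (h.above n) (h.below n)

theorem parts_lt_iff (h : IsRowShift P R m m') {n : ℕ} :
    R.parts n < P.parts n ↔ m ≤ n ∧ n ≤ m' := by
  have hzpos : R.parts n < P.parts n ↔ zpos R n < zpos P n := by simp only [zpos]; omega
  rw [hzpos]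
  refine ⟨fun hlt => ?_, fun hn => h.zpos_lt hn.1 hn.2⟩
  by_contra hn
  exact hlt.ne (h.zpos_eq (by omega))

theorem parts_le (h : IsRowShift P R m m') : R ≤ P := fun n => by
  by_cases hn : m ≤ n ∧ n ≤ m'
  · exact (h.parts_lt_iff.2 hn).le
  · have := h.zpos_eq (n := n) (by omega)
    simp only [zpos] at this
    omega

theorem parts_succ (h : IsRowShift P R m m') {n : ℕ} (hm : m ≤ n) (hm' : n < m') :
    P.parts (n + 1) = R.parts n + 1 := by
  have := h.between n hm hm'
  simp only [zpos] at this
  omega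

theorem rowCount_skew (h : IsRowShift P R m m') : rowCount (P.skew R) = m' + 1 - m := by
  have hrows : Prod.fst '' P.skew R = (Finset.Icc m m' : Set ℕ) := by
    ext n
    rw [Finset.coe_Icc, Set.mem_Icc, ← h.parts_lt_iff]
    simp only [Set.mem_image, Prod.exists, exists_and_right, exists_eq_right, Partition.mem_skew]
    exact ⟨fun ⟨j, hj⟩ => hj.1.trans_lt hj.2, fun hn => ⟨_, le_rfl, hn⟩⟩
  rw [rowCount, hrows, Set.ncard_coe_finset, Nat.card_Icc]

/-- The row lengths telescope, since the interior rows satisfy `zpos R n = zpos P (n + 1)`. -/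
theorem sum_zpos_sub (h : IsRowShift P R m m') :
    ∑ n ∈ Finset.Ico m (m' + 1), (zpos P n - zpos R n) = zpos P m - zpos R m' := by
  rw [Finset.sum_Ico_succ_top h.le, Finset.sum_congr rfl fun n hn => by
    rw [h.between n (Finset.mem_Ico.1 hn).1 (Finset.mem_Ico.1 hn).2], ← neg_inj,
    neg_add, ← Finset.sum_neg_distrib]
  simp only [neg_sub, Finset.sum_Ico_sub (zpos P) h.le]
  ring

theorem ncard_skew (h : IsRowShift P R m m') :
    ((P.skew R).ncard : ℤ) = zpos P m - zpos R m' := by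
  obtain ⟨N, hP⟩ := P.eventually_zero
  have hm' : m' < N := by
    by_contra hN
    have := h.parts_lt_iff.2 ⟨h.le, le_rfl⟩
    rw [hP m' (by omega)] at this
    omega
  rw [Partition.ncard_skew hP, ← h.sum_zpos_sub, Nat.cast_sum]
  have hsub (n : ℕ) : ((P.parts n - R.parts n : ℕ) : ℤ) = zpos P n - zpos R n := by
    rw [Nat.cast_sub (h.parts_le n), zpos, zpos]
    ring
  simp only [hsub]
  refine (Finset.sum_subset (fun n hn => ?_) fun n _ hn => ?_).symm
  · simp only [Finset.mem_Ico, Finset.mem_range] at *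
    omega
  · rw [h.zpos_eq (by simp only [Finset.mem_Ico] at hn; omega), sub_self]

end IsRowShift

theorem exists_lt_zpos_iff (P : Partition) {m : ℕ} {y : ℤ} (hy : y < zpos P m) :
    ∃ m', ∀ n, y < zpos P n ↔ n ≤ m' := by
  obtain ⟨N, hN⟩ := eventually_zpos_eq P
  have hex : ∃ n, zpos P n ≤ y := ⟨max N y.natAbs, by rw [hN _ (le_max_left _ _)]; omega⟩
  have hmono {n l : ℕ} (hnl : n ≤ l) := (zpos_strictAnti P).antitone hnl
  have hpos : 0 < Nat.find hex :=
    Nat.pos_of_ne_zero fun h => (hmono m.zero_le).not_gt ((h ▸ Nat.find_spec hex).trans_lt hy)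
  refine ⟨Nat.find hex - 1, fun n => ⟨fun hn => ?_, fun hn => ?_⟩⟩
  · by_contra hlt
    exact hn.not_ge ((hmono (by omega)).trans (Nat.find_spec hex))
  · exact not_le.1 (Nat.find_min hex (by omega))

theorem exists_isRowShift (P : Partition) {m : ℕ} {y : ℤ} (hy : y < zpos P m)
    (hgap : ∀ n, zpos P n ≠ y) : ∃ R m', IsRowShift P R m m' ∧ zpos R m' = y := by
  obtain ⟨m', hm'⟩ := exists_lt_zpos_iff P hy
  obtain ⟨N, hN⟩ := eventually_zpos_eq P
  have hle : m ≤ m' := (hm' m).1 hy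
  let f : ℕ → ℤ := fun n =>
    if n < m then zpos P n else if n < m' then zpos P (n + 1) else if n = m' then y else zpos P n
  have hf : StrictAnti f := strictAnti_nat_of_succ_lt fun n => by
    have hPn := zpos_strictAnti P (Nat.lt_add_one n)
    have hPn' := zpos_strictAnti P (Nat.lt_add_one (n + 1))
    have hyn := hm' (n + 1)
    have hgn := hgap (n + 1)
    simp only [f]
    split_ifs <;> omega
  obtain ⟨R, hR⟩ := exists_zpos_eq (N := max N (m' + 1)) hf fun n hn => by
    rw [ge_iff_le, max_le_iff] at hn
    rw [← hN n hn.1]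
    simp only [f]
    split_ifs <;> first | rfl | omega
  refine ⟨R, m', ⟨hle, fun n hn => ?_, fun n hn hn' => ?_, fun n hn => ?_, ?_⟩, ?_⟩
  all_goals rw [hR]; simp only [f]; split_ifs <;> first | rfl | omega

/-- Two cells are joined in `S` if a path of adjacent cells inside `S` links them. -/
abbrev CellsJoined (S : Set (ℕ × ℕ)) : ℕ × ℕ → ℕ × ℕ → Prop :=
  Relation.ReflTransGen fun c d => c ∈ S ∧ d ∈ S ∧ Adj c d

theorem CellsJoined.symm {S : Set (ℕ × ℕ)} {c d : ℕ × ℕ} (h : CellsJoined S c d) :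
    CellsJoined S d c :=
  have : Std.Symm fun c d => c ∈ S ∧ d ∈ S ∧ Adj c d :=
    ⟨fun _ _ ⟨hc, hd, hcd⟩ => ⟨hd, hc, by unfold Adj at *; omega⟩⟩
  Std.Symm.symm _ _ h

theorem isConnectedSet_of_forall_cellsJoined {S : Set (ℕ × ℕ)} (c₀ : ℕ × ℕ)
    (h : ∀ c ∈ S, CellsJoined S c c₀) : IsConnectedSet S :=
  fun c hc d hd => (h c hc).trans (CellsJoined.symm (h d hd))

theorem IsConnectedSet.exists_vertical_pair {S : Set (ℕ × ℕ)} (hS : IsConnectedSet S)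
    {c d : ℕ × ℕ} (hc : c ∈ S) (hd : d ∈ S) {n : ℕ} (hcn : c.1 ≤ n) (hnd : n < d.1) :
    ∃ j, (n, j) ∈ S ∧ (n + 1, j) ∈ S := by
  by_contra! hcut
  have hle : ∀ e, CellsJoined S c e → e.1 ≤ n := fun e he => by
    induction he with
    | refl => exact hcn
    | @tail a b _ hab ih =>
      obtain ⟨ha, hb, hadj⟩ := hab
      by_contra hbn
      unfold Adj at hadj
      obtain ⟨i, j⟩ := a
      obtain ⟨i', j'⟩ := b
      obtain rfl : i = n := by omega
      obtain rfl : i' = i + 1 := by omega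
      obtain rfl : j' = j := by omega
      exact hcut j' ha hb
  exact (hle d (hS c hc d hd)).not_gt hnd

section RimHook

variable {P R : Partition}

theorem cellsJoined_row_start {i j : ℕ} (h : (i, j) ∈ P.skew R) :
    CellsJoined (P.skew R) (i, j) (i, R.parts i) := by
  have hij := Partition.mem_skew.1 h
  induction j, hij.1 using Nat.le_induction with
  | base => exact .refl
  | succ j hj ih =>
    have hj' : (i, j) ∈ P.skew R := Partition.mem_skew.2 ⟨hj, by omega⟩
    exact .head ⟨h, hj', by simp [Adj]⟩ (ih hj' (Partition.mem_skew.1 hj'))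

theorem NoSquare.parts_succ_le (h : NoSquare (P.skew R)) (n : ℕ) :
    P.parts (n + 1) ≤ R.parts n + 1 := by
  by_contra hlt
  have hP := P.antitone (Nat.le_add_right n 1)
  have hR := R.antitone (Nat.le_add_right n 1)
  exact h ⟨n, R.parts n, by simp only [Partition.mem_skew]; omega⟩

namespace IsRowShift

variable {m m' : ℕ}

theorem isConnectedSet_skew (h : IsRowShift P R m m') : IsConnectedSet (P.skew R) := by
  refine isConnectedSet_of_forall_cellsJoined (m', R.parts m') fun ⟨i, j⟩ hij => ?_
  have hi := h.parts_lt_iff.1 ((Partition.mem_skew.1 hij).1.trans_lt (Partition.mem_skew.1 hij).2)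
  refine (cellsJoined_row_start hij).trans ?_
  clear hij
  refine Nat.decreasingInduction' (m := i)
    (P := fun i => CellsJoined (P.skew R) (i, R.parts i) (m', R.parts m'))
    (fun n hn hin ih => ?_) hi.2 .refl
  have hsucc := h.parts_succ (hi.1.trans hin) hn
  have hstart : (n, R.parts n) ∈ P.skew R :=
    Partition.mem_skew.2 ⟨le_rfl, h.parts_lt_iff.2 ⟨by omega, by omega⟩⟩
  have hbelow : (n + 1, R.parts n) ∈ P.skew R :=
    Partition.mem_skew.2 ⟨R.antitone (Nat.le_add_right n 1), by omega⟩
  exact .head ⟨hstart, hbelow, by simp [Adj]⟩ ((cellsJoined_row_start hbelow).trans ih)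

theorem noSquare_skew (h : IsRowShift P R m m') : NoSquare (P.skew R) := by
  rintro ⟨i, j, hij, -, -, hij'⟩
  rw [Partition.mem_skew] at hij hij'
  have hi := h.parts_lt_iff.1 (hij.1.trans_lt hij.2)
  have hi' := h.parts_lt_iff.1 (hij'.1.trans_lt hij'.2)
  have := h.parts_succ hi.1 (by omega)
  omega

theorem isRimHook (h : IsRowShift P R m m') {t : ℕ} (ht : zpos P m - zpos R m' = t) :
    IsRimHook P R t := by
  have hcell : (m, R.parts m) ∈ P.skew R :=
    Partition.mem_skew.2 ⟨le_rfl, h.parts_lt_iff.2 ⟨le_rfl, h.le⟩⟩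
  exact ⟨h.parts_le, ⟨_, hcell⟩, h.isConnectedSet_skew, h.noSquare_skew,
    by exact_mod_cast h.ncard_skew.trans ht⟩

end IsRowShift

theorem IsRimHook.exists_isRowShift {t : ℕ} (h : IsRimHook P R t) :
    ∃ m m', IsRowShift P R m m' := by
  obtain ⟨hle, ⟨⟨i, j⟩, hij⟩, hconn, hsq, -⟩ := h
  have hle' : ∀ n, R.parts n ≤ P.parts n := hle
  have hfin : {n | R.parts n < P.parts n}.Finite := by
    obtain ⟨N, hN⟩ := P.eventually_zero
    refine (Set.finite_lt_nat N).subset fun n (hn : R.parts n < P.parts n) => ?_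
    by_contra hlt
    exact Nat.not_lt_zero _ (hN n (not_lt.1 hlt) ▸ hn)
  have hne : {n | R.parts n < P.parts n}.Nonempty :=
    ⟨i, (Partition.mem_skew.1 hij).1.trans_lt (Partition.mem_skew.1 hij).2⟩
  obtain ⟨m, hm, hmin⟩ := Set.exists_min_image _ id hfin hne
  obtain ⟨m', hm', hmax⟩ := Set.exists_max_image _ id hfin hne
  simp only [Set.mem_ofPred_eq, id] at hm hm' hmin hmax
  have hcell (n : ℕ) (hn : R.parts n < P.parts n) : (n, R.parts n) ∈ P.skew R :=
    Partition.mem_skew.2 ⟨le_rfl, hn⟩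
  have hsucc (n : ℕ) (hn : m ≤ n) (hn' : n < m') : P.parts (n + 1) = R.parts n + 1 := by
    obtain ⟨j, hj, hj'⟩ := hconn.exists_vertical_pair (hcell m hm) (hcell m' hm') hn hn'
    rw [Partition.mem_skew] at hj hj'
    exact (hsq.parts_succ_le n).antisymm (by omega)
  have houter (n : ℕ) (hn : n < m ∨ m' < n) : R.parts n = P.parts n := by
    refine (hle' n).antisymm (not_lt.1 fun hlt => ?_)
    have := hmin n hlt
    have := hmax n hlt
    omega
  refine ⟨m, m', hmin m' hm', fun n hn => ?_, fun n hn hn' => ?_, fun n hn => ?_, ?_⟩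
  · rw [zpos, zpos, houter n (.inl hn)]
  · simp only [zpos, hsucc n hn hn']
    push_cast
    ring
  · rw [zpos, zpos, houter n (.inr hn)]
  · have := (zpos_strictAnti P).antitone (hmin m' hm')
    simp only [zpos] at *
    omega

end RimHook

/-- A Maya diagram: a set of integers that contains all sufficiently small and no sufficiently
large ones. It records the positions of the zeros in a 0/1 sequence. -/
structure MayaDiagram where
  carrier : Set ℤ
  bddAbove : BddAbove carrier
  bddBelow_compl : BddBelow carrierᶜ

namespace MayaDiagram

instance : SetLike MayaDiagram ℤ where
  coe := carrier
  coe_injective S T h := by cases S; cases T; congr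

@[ext]
theorem ext {S T : MayaDiagram} (h : ∀ x, x ∈ S ↔ x ∈ T) : S = T :=
  SetLike.ext h

/-- The 0/1 sequence of the empty partition. -/
def vacuum : MayaDiagram where
  carrier := Set.Iio 0
  bddAbove := bddAbove_Iio
  bddBelow_compl := by simpa only [Set.compl_Iio] using bddBelow_Ici

theorem mem_vacuum {x : ℤ} : x ∈ vacuum ↔ x < 0 :=
  Iff.rfl

/-- Move the zero at position `x` to position `y`. -/
def move (S : MayaDiagram) (x y : ℤ) : MayaDiagram where
  carrier := insert y (S.carrier \ {x})
  bddAbove := (S.bddAbove.mono Set.sdiff_subset).insert y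
  bddBelow_compl := (S.bddBelow_compl.insert x).mono fun z hz => by
    by_contra h
    simp only [Set.mem_compl_iff, Set.mem_insert_iff, Set.mem_sdiff, Set.mem_singleton_iff] at *
    tauto

theorem mem_move {S : MayaDiagram} {x y z : ℤ} : z ∈ S.move x y ↔ z = y ∨ z ∈ S ∧ z ≠ x :=
  Iff.rfl

theorem move_left_injective {S : MayaDiagram} {x x' y y' : ℤ} (hx : x ∈ S) (hy : y ∉ S)
    (h : S.move x y = S.move x' y') : x = x' := by
  by_contra hne
  have hmem : x ∈ S.move x y := h ▸ mem_move.2 (.inr ⟨hx, hne⟩)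
  rcases mem_move.1 hmem with rfl | ⟨-, h⟩
  exacts [hy hx, h rfl]

open Classical in
/-- The zeros that are passed when a zero moves from position `x` to position `y < x`. -/
noncomputable def between (S : MayaDiagram) (x y : ℤ) : Finset ℤ :=
  {z ∈ Finset.Ioo y x | z ∈ S}

theorem mem_between {S : MayaDiagram} {x y z : ℤ} :
    z ∈ S.between x y ↔ (y < z ∧ z < x) ∧ z ∈ S := by
  simp only [between, Finset.mem_filter, Finset.mem_Ioo]

theorem removable_finite (S : MayaDiagram) (t : ℕ) : {x | x ∈ S ∧ x - t ∉ S}.Finite := by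
  obtain ⟨b, hb⟩ := S.bddBelow_compl
  refine BddBelow.finite_of_bddAbove ⟨b + t, fun x hx => ?_⟩ (S.bddAbove.mono fun x hx => hx.1)
  linarith [hb hx.2]

/-- The positions of the zeros that can move down by `t`, that is, of the rim hooks of length `t`
when `0 < t`. -/
noncomputable def removable (S : MayaDiagram) (t : ℕ) : Finset ℤ :=
  (S.removable_finite t).toFinset

theorem mem_removable {S : MayaDiagram} {t : ℕ} {x : ℤ} :
    x ∈ S.removable t ↔ x ∈ S ∧ x - t ∉ S :=
  (S.removable_finite t).mem_toFinset

end MayaDiagram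

namespace Partition

/-- The positions of the zeros in the 0/1 sequence of a partition. -/
def zeros (P : Partition) : MayaDiagram where
  carrier := {x | isZeroAt P x}
  bddAbove := ⟨zpos P 0, fun _ ⟨n, hn⟩ => hn ▸ (zpos_strictAnti P).antitone n.zero_le⟩
  bddBelow_compl := by
    obtain ⟨N, hN⟩ := eventually_zpos_eq P
    refine ⟨-N, fun x hx => ?_⟩
    by_contra hlt
    exact hx ⟨(-x - 1).toNat, by rw [hN _ (by omega)]; omega⟩

theorem mem_zeros {P : Partition} {x : ℤ} : x ∈ P.zeros ↔ isZeroAt P x :=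
  Iff.rfl

theorem zpos_mem_zeros (P : Partition) (n : ℕ) : zpos P n ∈ P.zeros :=
  ⟨n, rfl⟩

theorem zeros_injective : Function.Injective zeros := fun P R h => by
  have hrange : Set.range (-zpos P) = Set.range (-zpos R) := by
    ext x
    have hx := SetLike.ext_iff.1 h (-x)
    simpa only [mem_zeros, isZeroAt, Set.mem_range, Pi.neg_apply, neg_eq_iff_eq_neg] using hx
  exact zpos_injective (neg_injective
    (((zpos_strictAnti P).neg.range_inj (zpos_strictAnti R).neg).1 hrange))

theorem zeros_empty : empty.zeros = MayaDiagram.vacuum := by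
  ext x
  simp only [mem_zeros, isZeroAt, zpos_empty, MayaDiagram.mem_vacuum]
  exact ⟨fun ⟨n, hn⟩ => by omega, fun h => ⟨(-x - 1).toNat, by omega⟩⟩

end Partition

open MayaDiagram

section RimHookZeros

variable {P R : Partition}

namespace IsRowShift

variable {m m' : ℕ}

theorem lt_zpos_iff (h : IsRowShift P R m m') {n : ℕ} : zpos R m' < zpos P n ↔ n ≤ m' := by
  refine ⟨fun hlt => ?_, fun hn => ?_⟩
  · by_contra! hn
    exact hlt.not_ge (h.below n hn ▸ ((zpos_strictAnti R) hn).le)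
  · exact (h.zpos_lt h.le le_rfl).trans_le ((zpos_strictAnti P).antitone hn)

theorem zpos_notMem_zeros (h : IsRowShift P R m m') : zpos R m' ∉ P.zeros := by
  rintro ⟨n, hn⟩
  rcases le_or_gt n m' with hle | hlt
  · exact (h.lt_zpos_iff.2 hle).ne' hn
  · exact (zpos_strictAnti R hlt).ne (h.below n hlt ▸ hn)

theorem zeros_eq (h : IsRowShift P R m m') : R.zeros = P.zeros.move (zpos P m) (zpos R m') := by
  have hinj := (zpos_strictAnti P).injective
  ext z
  rw [mem_move]
  constructor
  · rintro ⟨n, rfl⟩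
    rcases eq_or_ne n m' with rfl | hne
    · exact .inl rfl
    · by_cases hn : m ≤ n ∧ n < m'
      · exact .inr (h.between n hn.1 hn.2 ▸ ⟨P.zpos_mem_zeros _, hinj.ne (by omega)⟩)
      · have := h.le
        exact .inr (h.zpos_eq (n := n) (by omega) ▸ ⟨P.zpos_mem_zeros _, hinj.ne (by omega)⟩)
  · rintro (rfl | ⟨⟨n, rfl⟩, hn⟩)
    · exact R.zpos_mem_zeros m'
    · have hnm : n ≠ m := fun h => hn (h ▸ rfl)
      by_cases hmn : m < n ∧ n ≤ m'
      · obtain ⟨l, rfl⟩ := Nat.exists_eq_add_of_lt hmn.1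
        exact ⟨m + l, h.between _ (by omega) (by omega)⟩
      · exact ⟨n, h.zpos_eq (by omega)⟩

theorem card_between (h : IsRowShift P R m m') :
    (P.zeros.between (zpos P m) (zpos R m')).card = m' - m := by
  have hbetween : P.zeros.between (zpos P m) (zpos R m') =
      (Finset.Ioc m m').map ⟨zpos P, (zpos_strictAnti P).injective⟩ := by
    ext z
    simp only [mem_between, Finset.mem_map, Finset.mem_Ioc, Function.Embedding.coeFn_mk]
    constructor
    · rintro ⟨⟨hlt, hlt'⟩, n, rfl⟩
      exact ⟨n, ⟨(zpos_strictAnti P).lt_iff_gt.1 hlt', h.lt_zpos_iff.1 hlt⟩, rfl⟩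
    · rintro ⟨n, ⟨hlt, hle⟩, rfl⟩
      exact ⟨⟨h.lt_zpos_iff.2 hle, zpos_strictAnti P hlt⟩, P.zpos_mem_zeros n⟩
  rw [hbetween, Finset.card_map, Nat.card_Ioc]

end IsRowShift

theorem exists_isRowShift_of_mem_zeros {x y : ℤ} (hx : x ∈ P.zeros) (hy : y ∉ P.zeros)
    (hyx : y < x) : ∃ R m m', IsRowShift P R m m' ∧ zpos P m = x ∧ zpos R m' = y := by
  obtain ⟨m, rfl⟩ := hx
  obtain ⟨R, m', h, hR⟩ := exists_isRowShift P hyx fun n hn => hy ⟨n, hn⟩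
  exact ⟨R, m, m', h, rfl, hR⟩

theorem exists_isRowShift_of_zeros_eq {t : ℕ} (ht : 0 < t) {x : ℤ} (hx : x ∈ P.zeros.removable t)
    (hR : R.zeros = P.zeros.move x (x - t)) :
    ∃ m m', IsRowShift P R m m' ∧ zpos P m = x ∧ zpos R m' = x - t := by
  obtain ⟨hx, hy⟩ := mem_removable.1 hx
  obtain ⟨R', m, m', h, rfl, hm'⟩ := exists_isRowShift_of_mem_zeros hx hy (by omega)
  obtain rfl : R' = R := Partition.zeros_injective (by rw [h.zeros_eq, hm', hR])
  exact ⟨m, m', h, rfl, hm'⟩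

theorem isRimHook_iff {t : ℕ} (ht : 0 < t) :
    IsRimHook P R t ↔ ∃ x ∈ P.zeros.removable t, R.zeros = P.zeros.move x (x - t) := by
  constructor
  · intro h
    obtain ⟨m, m', hshift⟩ := h.exists_isRowShift
    have ht : zpos P m - t = zpos R m' := by
      rw [← h.2.2.2.2, hshift.ncard_skew]
      ring
    exact ⟨zpos P m, mem_removable.2 ⟨P.zpos_mem_zeros m, ht ▸ hshift.zpos_notMem_zeros⟩,
      ht ▸ hshift.zeros_eq⟩
  · rintro ⟨x, hx, hR⟩
    obtain ⟨m, m', hshift, rfl, hm'⟩ := exists_isRowShift_of_zeros_eq ht hx hR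
    exact hshift.isRimHook (by rw [hm']; ring)

theorem exists_zeros_eq_move {t : ℕ} (ht : 0 < t) {x : ℤ} (hx : x ∈ P.zeros.removable t) :
    ∃ R : Partition, R.zeros = P.zeros.move x (x - t) := by
  obtain ⟨hx, hy⟩ := mem_removable.1 hx
  obtain ⟨R, m, m', h, rfl, hm'⟩ := exists_isRowShift_of_mem_zeros hx hy (by omega)
  exact ⟨R, hm' ▸ h.zeros_eq⟩

theorem rowCount_skew_sub_one {t : ℕ} (ht : 0 < t) {x : ℤ} (hx : x ∈ P.zeros.removable t)
    (hR : R.zeros = P.zeros.move x (x - t)) :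
    rowCount (P.skew R) - 1 = (P.zeros.between x (x - t)).card := by
  obtain ⟨m, m', h, rfl, hm'⟩ := exists_isRowShift_of_zeros_eq ht hx hR
  rw [h.rowCount_skew, ← hm', h.card_between]
  omega

end RimHookZeros

open Classical in
/-- The Murnaghan–Nakayama recursion on 0/1 sequences: the signed number of ways of reaching the
sequence of the empty partition by removing rim hooks whose lengths are listed in order. -/
noncomputable def mnSum : List ℕ → MayaDiagram → ℤ
  | [], S => if S = vacuum then 1 else 0
  | t :: l, S => ∑ x ∈ S.removable t,
      (-1) ^ (S.between x (x - t)).card * mnSum l (S.move x (x - t))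

theorem mnSum_nil_zeros (P : Partition) [Decidable (P = Partition.empty)] :
    mnSum [] P.zeros = if P = Partition.empty then 1 else 0 := by
  rw [mnSum, ← Partition.zeros_empty]
  simp only [Partition.zeros_injective.eq_iff]

theorem isStep_iff_isRimHook {P R : Partition} {t : ℕ} (ht : 0 < t) :
    IsStep P R t ↔ IsRimHook P R t := by
  simp only [IsStep, ht, ht.ne', false_and, true_and, false_or]

theorem exists_bijective_isStep (P : Partition) {t : ℕ} (ht : 0 < t) :
    ∃ e : {x // x ∈ P.zeros.removable t} → {R // IsStep P R t}, Function.Bijective e ∧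
      ∀ x, (e x).1.zeros = P.zeros.move x (x - t) := by
  choose R hR using fun x : {x // x ∈ P.zeros.removable t} => exists_zeros_eq_move ht x.2
  have hstep x : IsStep P (R x) t :=
    (isStep_iff_isRimHook ht).2 ((isRimHook_iff ht).2 ⟨x, x.2, hR x⟩)
  refine ⟨fun x => ⟨R x, hstep x⟩, ⟨fun x x' h => ?_, fun ⟨R', h⟩ => ?_⟩, hR⟩
  · have hmem := mem_removable.1 x.2
    refine Subtype.ext (move_left_injective hmem.1 hmem.2 (y' := x' - t) ?_)
    rw [← hR x, ← hR x', (Subtype.mk.inj h : R x = R x')]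
  · obtain ⟨x, hx, hzeros⟩ := (isRimHook_iff ht).1 ((isStep_iff_isRimHook ht).1 h)
    exact ⟨⟨x, hx⟩, Subtype.ext (Partition.zeros_injective ((hR ⟨x, hx⟩).trans hzeros.symm))⟩

/-- Rim hook tableaux of shape `P` whose hook lengths are given by a function on `Fin n` instead
of a list; this makes it possible to split off the last hook. -/
structure HookChain {n : ℕ} (f : Fin n → ℕ) (P : Partition) where
  chain : Fin (n + 1) → Partition
  chain_zero : chain 0 = Partition.empty
  chain_last : chain (Fin.last n) = P
  step : ∀ j : Fin n, IsStep (chain j.succ) (chain j.castSucc) (f j)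

namespace HookChain

variable {n : ℕ}

/-- The total height of a chain of rim hooks. -/
noncomputable def height {f : Fin n → ℕ} {P : Partition} (c : HookChain f P) : ℕ :=
  ∑ j : Fin n, (rowCount ((c.chain j.succ).skew (c.chain j.castSucc)) - 1)

@[ext]
theorem ext {f : Fin n → ℕ} {P : Partition} {c d : HookChain f P}
    (h : ∀ j, c.chain j = d.chain j) : c = d := by
  cases c; cases d; congr; exact funext h

theorem sigma_ext {f : Fin n → ℕ} {p : Partition → Prop} {z w : Σ R : {R // p R}, HookChain f R.1}
    (h : ∀ j, z.2.chain j = w.2.chain j) : z = w := by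
  obtain ⟨⟨R, hR⟩, c, hc₀, hc, hcs⟩ := z
  obtain ⟨⟨R', hR'⟩, d, hd₀, hd, hds⟩ := w
  obtain rfl : c = d := funext h
  obtain rfl : R = R' := hc.symm.trans hd
  rfl

/-- Splitting off the last hook of a chain. -/
def snocEquiv (f : Fin (n + 1) → ℕ) (P : Partition) :
    HookChain f P ≃ Σ R : {R // IsStep P R (f (Fin.last n))}, HookChain (Fin.init f) R.1 where
  toFun c := ⟨⟨c.chain (Fin.last n).castSucc, by
      simpa only [Fin.succ_last, c.chain_last] using c.step (Fin.last n)⟩,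
    fun j => c.chain j.castSucc, c.chain_zero, rfl, fun j => c.step j.castSucc⟩
  invFun z :=
    { chain := Fin.snoc z.2.chain P
      chain_zero := (Fin.snoc_castSucc (α := fun _ => Partition) P z.2.chain 0).trans
        z.2.chain_zero
      chain_last := Fin.snoc_last _ _
      step := Fin.lastCases
        (by simpa only [Fin.snoc_castSucc, Fin.succ_last, Fin.snoc_last, z.2.chain_last]
          using z.1.2)
        fun j => by
          rw [Fin.succ_castSucc, Fin.snoc_castSucc, Fin.snoc_castSucc]
          exact z.2.step j }
  left_inv c := by
    ext j
    refine Fin.lastCases ?_ (fun j => ?_) j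
    · simp only [Fin.snoc_last, c.chain_last]
    · simp only [Fin.snoc_castSucc]
  right_inv z := sigma_ext fun j => Fin.snoc_castSucc (α := fun _ => Partition) P z.2.chain j

theorem height_snocEquiv_symm {f : Fin (n + 1) → ℕ} {P : Partition}
    (z : Σ R : {R // IsStep P R (f (Fin.last n))}, HookChain (Fin.init f) R.1) :
    ((snocEquiv f P).symm z).height = z.2.height + (rowCount (P.skew z.1.1) - 1) := by
  simp only [height, snocEquiv, Equiv.coe_fn_symm_mk, Fin.sum_univ_castSucc, Fin.succ_castSucc,
    Fin.snoc_castSucc, Fin.succ_last, Fin.snoc_last, z.2.chain_last]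

theorem finsum_zero (f : Fin 0 → ℕ) (P : Partition) :
    ∑ᶠ c : HookChain f P, (-1 : ℤ) ^ c.height = mnSum [] P.zeros := by
  classical
  rw [mnSum_nil_zeros]
  split_ifs with h
  · subst h
    let c₀ : HookChain f Partition.empty := ⟨fun _ => Partition.empty, rfl, rfl, fun j => j.elim0⟩
    have : Unique (HookChain f Partition.empty) :=
      ⟨⟨c₀⟩, fun c => ext fun j => by rw [Fin.fin_one_eq_zero j]; exact c.chain_zero⟩
    rw [finsum_unique]
    simp only [height, Finset.univ_eq_empty, Finset.sum_empty, pow_zero]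
  · have : IsEmpty (HookChain f P) := ⟨fun c => h (c.chain_last.symm.trans c.chain_zero)⟩
    exact finsum_of_isEmpty _

theorem finite : ∀ {n : ℕ} {f : Fin n → ℕ} (_ : ∀ j, 0 < f j) (P : Partition),
    Finite (HookChain f P)
  | 0, f, _, P => @Finite.of_subsingleton _ ⟨fun c d => ext fun j => by
      rw [Fin.fin_one_eq_zero j, c.chain_zero, d.chain_zero]⟩
  | n + 1, f, hf, P => by
      obtain ⟨e, he, -⟩ := exists_bijective_isStep P (hf (Fin.last n))
      have := Finite.of_surjective e he.surjective
      have (R : {R // IsStep P R (f (Fin.last n))}) : Finite (HookChain (Fin.init f) R.1) :=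
        finite (fun j => hf j.castSucc) R.1
      exact Finite.of_equiv _ (snocEquiv f P).symm

theorem finsum_eq_mnSum {f : Fin n → ℕ} (hf : ∀ j, 0 < f j) (P : Partition) :
    ∑ᶠ c : HookChain f P, (-1 : ℤ) ^ c.height = mnSum (List.ofFn f).reverse P.zeros := by
  induction n generalizing P with
  | zero => rw [List.ofFn_zero, List.reverse_nil, finsum_zero]
  | succ n ih =>
    have ht := hf (Fin.last n)
    have hinit (j : Fin n) : 0 < Fin.init f j := hf j.castSucc
    obtain ⟨e, he, hzeros⟩ := exists_bijective_isStep P ht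
    have := fun R => finite hinit R
    have := finite hf P
    have := Finite.of_surjective e he.surjective
    cases nonempty_fintype (HookChain f P)
    cases nonempty_fintype {R // IsStep P R (f (Fin.last n))}
    have (R : Partition) := Fintype.ofFinite (HookChain (Fin.init f) R)
    rw [finsum_eq_sum_of_fintype, ← (snocEquiv f P).symm.sum_comp, Fintype.sum_sigma,
      ← he.sum_comp, List.ofFn_succ', List.concat_eq_append, List.reverse_append,
      List.reverse_singleton, List.singleton_append, mnSum,
      ← Finset.sum_coe_sort (P.zeros.removable _)]
    refine Finset.sum_congr rfl fun x _ => ?_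
    have hrec := ih hinit (e x).1
    rw [finsum_eq_sum_of_fintype, hzeros x] at hrec
    simp only [height_snocEquiv_symm, pow_add, rowCount_skew_sub_one ht x.2 (hzeros x)]
    rw [← Finset.sum_mul, hrec, mul_comm]
    rfl

end HookChain

/-- A rim hook tableau is a chain indexed by the entries of its type. -/
def RHT.equivHookChain (P : Partition) (μ : List ℕ) : RHT P μ ≃ HookChain μ.get P where
  toFun T := ⟨T.chain, T.chain_zero, T.chain_last, T.step⟩
  invFun c := ⟨c.chain, c.chain_zero, c.chain_last, c.step⟩

theorem chiAux_eq_mnSum (P : Partition) {μ : List ℕ} (hμ : ∀ t ∈ μ, 0 < t) :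
    chiAux P μ = mnSum μ.reverse P.zeros := by
  have h := HookChain.finsum_eq_mnSum (fun j => hμ _ (μ.get_mem j)) P
  rw [List.ofFn_get] at h
  rw [← h]
  exact finsum_eq_of_bijective _ (RHT.equivHookChain P μ).bijective fun _ => rfl

theorem chi_eq_mnSum (P : Partition) {μ : Multiset ℕ} (hμ : ∀ t ∈ μ, 0 < t) :
    chi P μ = mnSum (μ.sort (· ≤ ·)) P.zeros := by
  rw [chi, typeList, chiAux_eq_mnSum, List.reverse_reverse]
  simpa only [List.mem_reverse, Multiset.mem_sort] using hμ

@[to_additive]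
theorem prod_fin_succ_div_castSucc {G : Type*} [CommGroup G] {n : ℕ} (f : Fin (n + 1) → G) :
    ∏ j : Fin n, f j.succ / f j.castSucc = f (Fin.last n) / f 0 := by
  induction n with
  | zero => simp only [Finset.univ_eq_empty, Finset.prod_empty, Fin.last_zero, div_self']
  | succ n ih =>
    have h := ih fun j => f j.castSucc
    simp only [← Fin.succ_castSucc, Fin.castSucc_zero] at h
    rw [Fin.prod_univ_castSucc, h, mul_comm, Fin.succ_last, div_mul_div_cancel]

theorem IsStep.size_eq {P R : Partition} {t : ℕ} (h : IsStep P R t) : P.size = t + R.size := by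
  rcases h with ⟨rfl, rfl⟩ | ⟨-, hle, -, -, -, rfl⟩
  · rw [zero_add]
  · exact (Partition.ncard_skew_add_size hle).symm

theorem RHT.sum_eq_size {P : Partition} {μ : List ℕ} (T : RHT P μ) : μ.sum = P.size := by
  have h := sum_fin_succ_sub_castSucc fun j => ((T.chain j).size : ℤ)
  rw [T.chain_last, T.chain_zero, Partition.size_empty, Nat.cast_zero, sub_zero] at h
  rw [← List.ofFn_get μ, List.sum_ofFn]
  zify
  rw [← h]
  refine Finset.sum_congr rfl fun j _ => ?_
  rw [(T.step j).size_eq, Nat.cast_add, add_sub_cancel_right]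

theorem nonempty_rht_of_chi_ne_zero {P : Partition} {μ : Multiset ℕ} (h : chi P μ ≠ 0) :
    Nonempty (RHT P (typeList μ)) := by
  by_contra hempty
  rw [not_nonempty_iff] at hempty
  exact h (finsum_of_isEmpty _)

theorem mem_typeList {μ : Multiset ℕ} {t : ℕ} : t ∈ typeList μ ↔ t ∈ μ := by
  rw [typeList, List.mem_reverse, Multiset.mem_sort]

theorem sum_eq_size_of_chi_ne_zero {P : Partition} {μ : Multiset ℕ} (h : chi P μ ≠ 0) :
    μ.sum = P.size := by
  obtain ⟨T⟩ := nonempty_rht_of_chi_ne_zero h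
  rw [← T.sum_eq_size, typeList, List.sum_reverse, ← Multiset.sum_coe, Multiset.sort_eq]

namespace MayaDiagram

variable {S : MayaDiagram} {x y z : ℤ}

theorem move_move_of_notMem (hy : y ∉ S) : (S.move x y).move y z = S.move x z := by
  ext w
  simp only [mem_move]
  grind

theorem move_move_of_mem (hxy : x ≠ y) (hx : x ∈ S) (hy : y ∈ S) (hz : z ∉ S) :
    (S.move y z).move x y = S.move x z := by
  ext w
  simp only [mem_move]
  grind

end MayaDiagram

section KHooks

variable {k : ℕ} {P R : Partition}

/-- Whether or not position `x - k` holds a zero, one of the two moves `x ↦ x - k` and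
`x - k ↦ x - k * (t + 1)` can be made first, and then the other one. -/
theorem reflTransGen_isRimHook_of_zeros_eq (hk : 0 < k) {t : ℕ} {x : ℤ}
    (hx : x ∈ P.zeros.removable (k * t))
    (hR : R.zeros = P.zeros.move x (x - (k * t : ℕ))) :
    Relation.ReflTransGen (fun A B => IsRimHook A B k) P R := by
  induction t generalizing P R x with
  | zero =>
    obtain ⟨hx, hx'⟩ := mem_removable.1 hx
    exact absurd hx (by simpa using hx')
  | succ t ih =>
    obtain ⟨hxP, hyP⟩ := mem_removable.1 hx
    have htarget : x - (k * (t + 1) : ℕ) = x - k - (k * t : ℕ) := by push_cast; ring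
    rw [htarget] at hyP hR
    by_cases hmid : x - k ∈ P.zeros
    · have hx' : x - k ∈ P.zeros.removable (k * t) := mem_removable.2 ⟨hmid, hyP⟩
      have hpos : 0 < k * t := Nat.pos_of_ne_zero fun h => by simp [h, hmid] at hyP
      obtain ⟨A, hA⟩ := exists_zeros_eq_move hpos hx'
      refine (ih hx' hA).tail ((isRimHook_iff hk).2 ⟨x, mem_removable.2 ?_, ?_⟩)
      · simp only [hA, mem_move]
        grind
      · rw [hR, hA, move_move_of_mem (by omega) hxP hmid hyP]
    · have hx' : x ∈ P.zeros.removable k := mem_removable.2 ⟨hxP, hmid⟩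
      obtain ⟨A, hA⟩ := exists_zeros_eq_move hk hx'
      have hstep : IsRimHook P A k := (isRimHook_iff hk).2 ⟨x, hx', hA⟩
      rcases Nat.eq_zero_or_pos t with rfl | ht
      · obtain rfl : R = A := Partition.zeros_injective (by simpa [hA] using hR)
        exact .single hstep
      · refine .head hstep (ih (x := x - k) (mem_removable.2 ?_) ?_)
        · have := Nat.mul_pos hk ht
          simp only [hA, mem_move]
          grind
        · rw [hR, hA, move_move_of_notMem hmid]

theorem IsStep.reflTransGen_isRimHook (hk : 0 < k) {t : ℕ} (h : IsStep P R (k * t)) :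
    Relation.ReflTransGen (fun A B => IsRimHook A B k) P R := by
  rcases h with ⟨-, rfl⟩ | ⟨ht, h⟩
  · exact .refl
  · obtain ⟨x, hx, hR⟩ := (isRimHook_iff ht).1 h
    exact reflTransGen_isRimHook_of_zeros_eq hk hx hR

theorem not_isRimHook_empty {t : ℕ} : ¬ IsRimHook Partition.empty R t := fun h => by
  obtain ⟨⟨i, j⟩, hij⟩ := h.2.1
  exact Nat.not_lt_zero _ (Partition.mem_skew.1 hij).2

theorem RHT.isKCore_empty (hk : 0 < k) {μ : List ℕ} (hμ : ∀ t ∈ μ, k ∣ t) (T : RHT P μ) :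
    IsKCore k P Partition.empty := by
  refine ⟨?_, fun ⟨_, h⟩ => not_isRimHook_empty h⟩
  rw [← T.chain_zero]
  refine Fin.reverseInduction
    (motive := fun j => Relation.ReflTransGen (fun A B => IsRimHook A B k) P (T.chain j))
    (by rw [T.chain_last]) (fun j ih => ih.trans ?_) 0
  obtain ⟨t, ht⟩ := hμ _ (μ.get_mem j)
  exact IsStep.reflTransGen_isRimHook hk (ht ▸ T.step j)

theorem isKCore_empty_of_chi_ne_zero (hk : 0 < k) {μ : Multiset ℕ}
    (h : chi P (μ.map fun x => k * x) ≠ 0) : IsKCore k P Partition.empty := by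
  obtain ⟨T⟩ := nonempty_rht_of_chi_ne_zero h
  refine T.isKCore_empty hk fun t ht => ?_
  obtain ⟨x, -, rfl⟩ := Multiset.mem_map.1 (mem_typeList.1 ht)
  exact dvd_mul_right k x

end KHooks

section Runners

variable {k : ℕ}

/-- The position, in a 0/1 sequence, of the `j`-th digit of the subsequence that consists of
every `k`-th digit and contains the `(i + 1)`-st digit after the median. -/
def runnerPos (i : Fin k) (j : ℤ) : ℤ :=
  (i : ℕ) + j * k

theorem runnerPos_emod (i : Fin k) (j : ℤ) : runnerPos i j % k = (i : ℕ) := by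
  rw [runnerPos, Int.add_mul_emod_self_right]
  exact Int.emod_eq_of_lt (by omega) (by omega)

theorem runnerPos_ediv (i : Fin k) (j : ℤ) : runnerPos i j / k = j := by
  rw [runnerPos, Int.add_mul_ediv_right _ _ (by have := i.pos; omega),
    Int.ediv_eq_zero_of_lt (by omega) (by omega), zero_add]

theorem runnerPos_inj {i i' : Fin k} {j j' : ℤ} :
    runnerPos i j = runnerPos i' j' ↔ i = i' ∧ j = j' := by
  refine ⟨fun h => ⟨Fin.ext ?_, ?_⟩, fun ⟨hi, hj⟩ => by rw [hi, hj]⟩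
  · have := runnerPos_emod i j
    rw [h, runnerPos_emod] at this
    exact_mod_cast this.symm
  · rw [← runnerPos_ediv i j, h, runnerPos_ediv]

theorem exists_runnerPos_eq (hk : 0 < k) (x : ℤ) : ∃ (i : Fin k) (j : ℤ), runnerPos i j = x := by
  have hnonneg := Int.emod_nonneg x (show (k : ℤ) ≠ 0 by omega)
  have hlt := Int.emod_lt_of_pos x (show (0 : ℤ) < k by omega)
  refine ⟨⟨(x % k).toNat, by omega⟩, x / k, ?_⟩
  rw [runnerPos, Int.toNat_of_nonneg hnonneg, Int.emod_add_ediv_mul]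

theorem runnerPos_strictMono (i : Fin k) : StrictMono (runnerPos i) := fun _ _ h =>
  Int.add_lt_add_left (Int.mul_lt_mul_of_pos_right h (by exact_mod_cast i.pos)) _

theorem runnerPos_sub (i : Fin k) (j : ℤ) (t : ℕ) :
    runnerPos i (j - t) = runnerPos i j - (k * t : ℕ) := by
  simp only [runnerPos]
  push_cast
  ring

theorem runnerPos_neg_iff {i : Fin k} {j : ℤ} : runnerPos i j < 0 ↔ j < 0 := by
  rw [← not_iff_not, not_lt, not_lt, ← runnerPos_ediv i j,
    Int.ediv_nonneg_iff_of_pos (by exact_mod_cast i.pos), runnerPos_ediv]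

namespace MayaDiagram

variable {S T : MayaDiagram}

/-- The subsequence of a 0/1 sequence that consists of every `k`-th digit and contains the
`(i + 1)`-st digit after the median. -/
def runner (S : MayaDiagram) (i : Fin k) : MayaDiagram where
  carrier := {j | runnerPos i j ∈ S}
  bddAbove := by
    obtain ⟨b, hb⟩ := S.bddAbove
    refine ⟨b / k, fun j hj => ?_⟩
    rw [← runnerPos_ediv i j]
    exact Int.ediv_le_ediv (by exact_mod_cast i.pos) (hb hj)
  bddBelow_compl := by
    obtain ⟨b, hb⟩ := S.bddBelow_compl
    refine ⟨b / k, fun j hj => ?_⟩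
    rw [← runnerPos_ediv i j]
    exact Int.ediv_le_ediv (by exact_mod_cast i.pos) (hb hj)

theorem mem_runner {i : Fin k} {j : ℤ} : j ∈ S.runner i ↔ runnerPos i j ∈ S :=
  Iff.rfl

theorem runner_vacuum (i : Fin k) : vacuum.runner i = vacuum := by
  ext j
  simp only [mem_runner, mem_vacuum, runnerPos_neg_iff]

theorem eq_of_runner_eq (hk : 0 < k) (h : ∀ i : Fin k, S.runner i = T.runner i) : S = T := by
  ext x
  obtain ⟨i, j, rfl⟩ := exists_runnerPos_eq hk x
  rw [← mem_runner, h i, mem_runner]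

theorem runner_move (S : MayaDiagram) (i : Fin k) (j j' : ℤ) :
    (S.move (runnerPos i j) (runnerPos i j')).runner =
      Function.update S.runner i ((S.runner i).move j j') := by
  funext i'
  ext l
  rcases eq_or_ne i' i with rfl | hi
  · simp only [Function.update_self, mem_runner, mem_move, ne_eq, runnerPos_inj, true_and]
  · simp only [Function.update_of_ne hi, mem_runner, mem_move, ne_eq, runnerPos_inj, hi,
      false_and, false_or, not_false_eq_true, and_true]

theorem sub_lt_of_mem_removable {t : ℕ} {x : ℤ} (hx : x ∈ S.removable t) : x - t < x := by
  obtain ⟨hmem, hnot⟩ := mem_removable.1 hx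
  refine sub_lt_self x (Nat.cast_pos.2 (Nat.pos_of_ne_zero fun ht => hnot ?_))
  rwa [ht, Nat.cast_zero, sub_zero]

theorem runnerPos_mem_removable {i : Fin k} {j : ℤ} {t : ℕ} :
    runnerPos i j ∈ S.removable (k * t) ↔ j ∈ (S.runner i).removable t := by
  rw [mem_removable, mem_removable, mem_runner, mem_runner, runnerPos_sub]

theorem sum_removable_mul {M : Type*} [AddCommMonoid M] (hk : 0 < k) (S : MayaDiagram) (t : ℕ)
    (f : ℤ → M) : ∑ x ∈ S.removable (k * t), f x =
      ∑ i : Fin k, ∑ j ∈ (S.runner i).removable t, f (runnerPos i j) := by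
  rw [Finset.sum_sigma', eq_comm]
  refine Finset.sum_bij (fun z _ => runnerPos z.1 z.2) (fun z hz => ?_) (fun z _ w _ h => ?_)
    (fun x hx => ?_) fun _ _ => rfl
  · exact runnerPos_mem_removable.2 (Finset.mem_sigma.1 hz).2
  · obtain ⟨i, j⟩ := z
    obtain ⟨i', j'⟩ := w
    obtain ⟨rfl, rfl⟩ := runnerPos_inj.1 h
    rfl
  · obtain ⟨i, j, rfl⟩ := exists_runnerPos_eq hk x
    exact ⟨⟨i, j⟩, Finset.mem_sigma.2 ⟨Finset.mem_univ i, runnerPos_mem_removable.1 hx⟩, rfl⟩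

end MayaDiagram

end Runners

section InversionSign

variable {α β : Type*} [LinearOrder α] [LinearOrder β]

/-- The sign of the permutation that sorts the elements of `Z` by their class `r`, without
changing the order inside a class: `-1` to the number of pairs in the wrong order. -/
def inversionSign (r : α → β) (Z : Finset α) : ℤˣ :=
  ∏ a ∈ Z, ∏ b ∈ Z, if b < a ∧ r a < r b then -1 else 1

theorem inversionSign_insert (r : α → β) {W : Finset α} {x : α} (hx : x ∉ W) :
    inversionSign r (insert x W) = inversionSign r W *
      ∏ b ∈ W, if b < x ∧ r x < r b ∨ x < b ∧ r b < r x then -1 else 1 := by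
  have hself : (if x < x ∧ r x < r x then -1 else 1 : ℤˣ) = 1 := if_neg fun h => h.1.false
  have hcross : (∏ b ∈ W, if b < x ∧ r x < r b ∨ x < b ∧ r b < r x then -1 else 1 : ℤˣ) =
      (∏ b ∈ W, if b < x ∧ r x < r b then -1 else 1) *
        ∏ b ∈ W, if x < b ∧ r b < r x then -1 else 1 := by
    rw [← Finset.prod_mul_distrib]
    refine Finset.prod_congr rfl fun b _ => ?_
    split_ifs <;> first | rfl | grind
  simp only [inversionSign, Finset.prod_insert hx, hself, one_mul, Finset.prod_mul_distrib,
    hcross]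
  rw [← mul_assoc, mul_comm]

/-- Moving an element within its class changes the relative order of exactly the pairs that it
forms with the elements it passes. -/
theorem inversionSign_insert_mul_inversionSign_insert {r : α → β} {W : Finset α} {x y : α}
    (hx : x ∉ W) (hy : y ∉ W) (hyx : y < x) (hr : r y = r x) :
    inversionSign r (insert x W) * inversionSign r (insert y W) =
      (-1) ^ {b ∈ W | (y < b ∧ b < x) ∧ r b ≠ r x}.card := by
  rw [inversionSign_insert r hx, inversionSign_insert r hy, mul_mul_mul_comm,
    Int.units_mul_self, one_mul, ← Finset.prod_mul_distrib, ← Finset.prod_const,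
    Finset.prod_filter]
  refine Finset.prod_congr rfl fun b hb => ?_
  have hbx : b ≠ x := fun h => hx (h ▸ hb)
  have hby : b ≠ y := fun h => hy (h ▸ hb)
  rw [hr]
  split_ifs <;> first | rfl | grind

end InversionSign

namespace MayaDiagram

variable {S : MayaDiagram} {a x y : ℤ}

theorem finite_inter_Ici (S : MayaDiagram) (a : ℤ) : ((S : Set ℤ) ∩ Set.Ici a).Finite :=
  BddBelow.finite_of_bddAbove ⟨a, fun _ hx => hx.2⟩ (S.bddAbove.mono Set.inter_subset_left)

/-- The zeros at the positions `≥ a`. -/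
noncomputable def window (S : MayaDiagram) (a : ℤ) : Finset ℤ :=
  (S.finite_inter_Ici a).toFinset

theorem mem_window {z : ℤ} : z ∈ S.window a ↔ z ∈ S ∧ a ≤ z :=
  (S.finite_inter_Ici a).mem_toFinset

theorem le_of_notMem (ha : ∀ z < a, z ∈ S) (hy : y ∉ S) : a ≤ y :=
  not_lt.1 fun h => hy (ha y h)

theorem mem_move_of_lt (ha : ∀ z < a, z ∈ S) (hy : y ∉ S) (hyx : y < x) :
    ∀ z < a, z ∈ S.move x y := fun z hz => by
  have := le_of_notMem ha hy
  exact mem_move.2 (.inr ⟨ha z hz, by omega⟩)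

theorem window_move (hx : a ≤ y) :
    (S.move x y).window a = insert y ((S.window a).erase x) := by
  ext z
  simp only [mem_window, mem_move, Finset.mem_insert, Finset.mem_erase]
  grind

/-- The sign of the permutation that sorts the zeros at the positions `≥ a` by residue modulo
`k`. -/
noncomputable def runnerSign (k : ℕ) (a : ℤ) (S : MayaDiagram) : ℤˣ :=
  inversionSign (fun z => z % (k : ℤ)) (S.window a)

theorem filter_between_eq_map {k t : ℕ} (S : MayaDiagram) (i : Fin k) (j : ℤ) :
    {b ∈ S.between (runnerPos i j) (runnerPos i (j - t)) | b % k = runnerPos i j % k} =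
      ((S.runner i).between j (j - t)).map
        ⟨runnerPos i, (runnerPos_strictMono i).injective⟩ := by
  ext b
  simp only [Finset.mem_filter, mem_between, Finset.mem_map, Function.Embedding.coeFn_mk,
    mem_runner]
  constructor
  · rintro ⟨⟨⟨hlt, hlt'⟩, hb⟩, hmod⟩
    obtain ⟨i', l, rfl⟩ := exists_runnerPos_eq i.pos b
    obtain rfl : i' = i := by
      rw [runnerPos_emod, runnerPos_emod] at hmod
      exact Fin.ext (by exact_mod_cast hmod)
    exact ⟨l, ⟨⟨(runnerPos_strictMono i').lt_iff_lt.1 hlt,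
      (runnerPos_strictMono i').lt_iff_lt.1 hlt'⟩, hb⟩, rfl⟩
  · rintro ⟨l, ⟨⟨hlt, hlt'⟩, hl⟩, rfl⟩
    exact ⟨⟨⟨runnerPos_strictMono i hlt, runnerPos_strictMono i hlt'⟩, hl⟩, by
      rw [runnerPos_emod, runnerPos_emod]⟩

theorem neg_one_pow_card_between {k t : ℕ} (ha : ∀ z < a, z ∈ S) {i : Fin k} {j : ℤ}
    (hj : j ∈ (S.runner i).removable t) :
    (-1) ^ (S.between (runnerPos i j) (runnerPos i (j - t))).card =
      runnerSign k a S * runnerSign k a (S.move (runnerPos i j) (runnerPos i (j - t))) *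
        (-1) ^ ((S.runner i).between j (j - t)).card := by
  obtain ⟨hx, hy⟩ := mem_removable.1 hj
  rw [mem_runner] at hx hy
  have hlt : runnerPos i (j - t) < runnerPos i j :=
    runnerPos_strictMono i (sub_lt_of_mem_removable hj)
  have hay := le_of_notMem ha hy
  have hmod : runnerPos i (j - t) % k = runnerPos i j % k := by
    rw [runnerPos_emod, runnerPos_emod]
  have hrunner := congr_arg Finset.card (filter_between_eq_map (t := t) S i j)
  rw [Finset.card_map] at hrunner
  rw [← hrunner]
  set x := runnerPos i j
  set y := runnerPos i (j - t)
  set W := (S.window a).erase x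
  have hxW : x ∉ W := Finset.notMem_erase _ _
  have hyW : y ∉ W := fun h => hy (mem_window.1 (Finset.mem_of_mem_erase h)).1
  have hpassed : {b ∈ W | (y < b ∧ b < x) ∧ b % k ≠ x % k} =
      {b ∈ S.between x y | ¬ b % k = x % k} := by
    ext b
    simp only [mem_between, W, Finset.mem_filter, Finset.mem_erase, mem_window]
    grind
  have hinsert : S.window a = insert x W :=
    (Finset.insert_erase (mem_window.2 ⟨hx, by omega⟩)).symm
  rw [runnerSign, runnerSign, window_move hay, hinsert, Finset.erase_insert hxW,
    inversionSign_insert_mul_inversionSign_insert hxW hyW hlt hmod, ← pow_add, hpassed,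
    add_comm, Finset.card_filter_add_card_filter_not]

end MayaDiagram

section Family

variable {ι : Type*} [Fintype ι] [DecidableEq ι]

/-- The Murnaghan–Nakayama recursion on a family of 0/1 sequences, where each rim hook is removed
from one member of the family. -/
noncomputable def mnSumFamily : List ℕ → (ι → MayaDiagram) → ℤ
  | [], S => ∏ i, mnSum [] (S i)
  | t :: l, S => ∑ i, ∑ x ∈ (S i).removable t, (-1) ^ ((S i).between x (x - t)).card *
      mnSumFamily l (Function.update S i ((S i).move x (x - t)))

end Family

theorem prod_mnSum_nil_runner {k : ℕ} (hk : 0 < k) (S : MayaDiagram) :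
    ∏ i : Fin k, mnSum [] (S.runner i) = mnSum [] S := by
  classical
  have hvacuum : S = vacuum ↔ ∀ i : Fin k, S.runner i = vacuum :=
    ⟨fun h i => h ▸ runner_vacuum i,
      fun h => eq_of_runner_eq hk fun i => (h i).trans (runner_vacuum i).symm⟩
  simp only [mnSum, hvacuum, Finset.prod_ite_zero, Finset.prod_const_one, Finset.mem_univ,
    true_imp_iff]

theorem mnSum_map_mul {k : ℕ} (hk : 0 < k) (l : List ℕ) {a : ℤ} {S : MayaDiagram}
    (ha : ∀ z < a, z ∈ S) : mnSum (l.map fun t => k * t) S =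
      (runnerSign k a S * runnerSign k a vacuum : ℤˣ) * mnSumFamily l (S.runner (k := k)) := by
  induction l generalizing S with
  | nil =>
    rw [List.map_nil, mnSumFamily, prod_mnSum_nil_runner hk, mnSum]
    split_ifs with h
    · rw [h, Int.units_mul_self, Units.val_one, one_mul]
    · rw [mul_zero]
  | cons t l ih =>
    rw [List.map_cons, mnSum, mnSumFamily, sum_removable_mul hk, Finset.mul_sum]
    refine Finset.sum_congr rfl fun i _ => ?_
    rw [Finset.mul_sum]
    refine Finset.sum_congr rfl fun j hj => ?_
    have ha' := mem_move_of_lt ha (mem_removable.1 hj).2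
      (runnerPos_strictMono i (sub_lt_of_mem_removable hj))
    have hsign := congr_arg Units.val (neg_one_pow_card_between ha hj)
    rw [← runnerPos_sub, ← runner_move, ih ha', ← mul_assoc, ← mul_assoc]
    congr 1
    push_cast at hsign ⊢
    rw [hsign]
    linear_combination (runnerSign k a S : ℤ) * (-1) ^ ((S.runner i).between j (j - t)).card *
      (runnerSign k a vacuum : ℤ) *
        Int.units_coe_mul_self (runnerSign k a (S.move (runnerPos i j) (runnerPos i (j - t))))

section Splittings

variable {ι : Type*} [Fintype ι] [DecidableEq ι]

noncomputable instance multisetHasAntidiagonal : Finset.HasAntidiagonal (Multiset ℕ) :=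
  Finset.HasAntidiagonal.antidiagonalOfLocallyFinite

theorem mem_piAntidiag_univ {ν : ι → Multiset ℕ} {μ : Multiset ℕ} :
    ν ∈ Finset.univ.piAntidiag μ ↔ ∑ i, ν i = μ := by
  simp only [Finset.mem_piAntidiag, Finset.mem_univ, implies_true, and_true]

theorem le_of_mem_piAntidiag_univ {μ : Multiset ℕ} {ν : ι → Multiset ℕ}
    (hν : ν ∈ Finset.univ.piAntidiag μ) (i : ι) : ν i ≤ μ :=
  mem_piAntidiag_univ.1 hν ▸
    Finset.single_le_sum (fun _ _ => Multiset.zero_le _) (Finset.mem_univ i)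

@[to_additive]
theorem prod_apply_update {M : Type*} [CommMonoid M] {α : ι → Type*} (g : ∀ i, α i → M)
    (f : ∀ i, α i) (i : ι) (a : α i) :
    ∏ j, g j (Function.update f i a j) = g i a * ∏ j ∈ Finset.univ.erase i, g j (f j) := by
  rw [← Finset.mul_prod_erase _ _ (Finset.mem_univ i), Function.update_self]
  congr 1
  refine Finset.prod_congr rfl fun j hj => ?_
  rw [Function.update_of_ne (Finset.ne_of_mem_erase hj)]

theorem sum_update_cons (ν : ι → Multiset ℕ) (i : ι) (t : ℕ) :
    ∑ j, Function.update ν i (t ::ₘ ν i) j = t ::ₘ ∑ j, ν j := by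
  rw [sum_apply_update (fun _ ν => ν) ν, ← Finset.add_sum_erase _ ν (Finset.mem_univ i)]
  exact Multiset.cons_add _ _ _

theorem sum_piAntidiag_update_cons {M : Type*} [AddCommMonoid M] (μ : Multiset ℕ) (i : ι) (t : ℕ)
    (F : (ι → Multiset ℕ) → M) :
    ∑ ν ∈ Finset.univ.piAntidiag μ, F (Function.update ν i (t ::ₘ ν i)) =
      ∑ ν ∈ Finset.univ.piAntidiag (t ::ₘ μ) with t ∈ ν i, F ν := by
  refine Finset.sum_bij' (fun ν _ => Function.update ν i (t ::ₘ ν i))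
    (fun ν _ => Function.update ν i ((ν i).erase t)) (fun ν hν => ?_) (fun ν hν => ?_)
    (fun ν _ => ?_) (fun ν hν => ?_) fun _ _ => rfl
  · rw [Finset.mem_filter, mem_piAntidiag_univ, sum_update_cons, mem_piAntidiag_univ.1 hν,
      Function.update_self]
    exact ⟨rfl, Multiset.mem_cons_self t _⟩
  · obtain ⟨hsum, ht⟩ := Finset.mem_filter.1 hν
    have h := sum_update_cons (Function.update ν i ((ν i).erase t)) i t
    rw [Function.update_self, Function.update_idem, Multiset.cons_erase ht,
      Function.update_eq_self, mem_piAntidiag_univ.1 hsum] at h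
    exact mem_piAntidiag_univ.2 ((Multiset.cons_inj_right t).1 h).symm
  · simp only [Function.update_self, Function.update_idem, Multiset.erase_cons_head,
      Function.update_eq_self]
  · simp only [Function.update_self, Function.update_idem,
      Multiset.cons_erase (Finset.mem_filter.1 hν).2, Function.update_eq_self]

theorem zpart_cons (t : ℕ) (μ : Multiset ℕ) :
    zpart (t ::ₘ μ) = zpart μ * (t * (μ.count t + 1)) := by
  have hfactorial (ν : Multiset ℕ) (hν : ν.toFinset ⊆ insert t μ.toFinset) :
      ∏ j ∈ ν.toFinset, (ν.count j).factorial =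
        (ν.count t).factorial * ∏ j ∈ μ.toFinset.erase t, (ν.count j).factorial := by
    rw [Finset.prod_subset hν, ← Finset.mul_prod_erase _ _ (Finset.mem_insert_self t μ.toFinset),
      Finset.erase_insert_eq_erase]
    intro j _ hj
    rw [Multiset.mem_toFinset] at hj
    rw [Multiset.count_eq_zero_of_notMem hj, Nat.factorial_zero]
  have hcount : ∏ j ∈ μ.toFinset.erase t, ((t ::ₘ μ).count j).factorial =
      ∏ j ∈ μ.toFinset.erase t, (μ.count j).factorial :=
    Finset.prod_congr rfl fun j hj => by
      rw [Multiset.count_cons_of_ne (Finset.ne_of_mem_erase hj)]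
  rw [zpart, zpart, hfactorial (t ::ₘ μ) (by rw [Multiset.toFinset_cons]),
    hfactorial μ (Finset.subset_insert _ _), hcount, Multiset.prod_cons,
    Multiset.count_cons_self, Nat.factorial_succ]
  ring

/-- The coefficient `z_μ / ∏ z_{ν_i}` of Littlewood's formula. -/
def splitCoeff (μ : Multiset ℕ) (ν : ι → Multiset ℕ) : ℚ :=
  zpart μ / ∏ i, (zpart (ν i) : ℚ)

theorem splitCoeff_update_cons {t : ℕ} (ht : t ≠ 0) (μ : Multiset ℕ) (ν : ι → Multiset ℕ)
    (i : ι) : ((t ::ₘ ν i).count t : ℚ) * splitCoeff (t ::ₘ μ) (Function.update ν i (t ::ₘ ν i)) =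
      (t ::ₘ μ).count t * splitCoeff μ ν := by
  have hprod : ∏ j, (zpart (Function.update ν i (t ::ₘ ν i) j) : ℚ) =
      (∏ j, (zpart (ν j) : ℚ)) * (t * ((ν i).count t + 1)) := by
    rw [prod_apply_update fun _ ν => (zpart ν : ℚ), zpart_cons,
      ← Finset.mul_prod_erase _ (fun j => (zpart (ν j) : ℚ)) (Finset.mem_univ i)]
    push_cast
    ring
  have ht : (t : ℚ) ≠ 0 := Nat.cast_ne_zero.2 ht
  have hcount : ((ν i).count t + 1 : ℚ) ≠ 0 := by positivity
  rw [splitCoeff, splitCoeff, hprod, zpart_cons, Multiset.count_cons_self,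
    Multiset.count_cons_self]
  push_cast
  field_simp

/-- Distributing `t ::ₘ μ` amounts to distributing `μ` and then choosing who gets `t`; a
distribution `ν` arises with total weight `∑ i, (ν i).count t / (t ::ₘ μ).count t = 1`. -/
theorem sum_splitCoeff_mul_update_cons {t : ℕ} (ht : t ≠ 0) (μ : Multiset ℕ)
    (F : (ι → Multiset ℕ) → ℚ) :
    ∑ i, ∑ ν ∈ Finset.univ.piAntidiag μ,
        splitCoeff μ ν * F (Function.update ν i (t ::ₘ ν i)) =
      ∑ ν ∈ Finset.univ.piAntidiag (t ::ₘ μ), splitCoeff (t ::ₘ μ) ν * F ν := by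
  have hcount : ((t ::ₘ μ).count t : ℚ) ≠ 0 := by
    rw [Multiset.count_cons_self]
    positivity
  have hterm (i : ι) : ((t ::ₘ μ).count t : ℚ) * ∑ ν ∈ Finset.univ.piAntidiag μ,
        splitCoeff μ ν * F (Function.update ν i (t ::ₘ ν i)) =
      ∑ ν ∈ Finset.univ.piAntidiag (t ::ₘ μ),
        ((ν i).count t : ℚ) * (splitCoeff (t ::ₘ μ) ν * F ν) := by
    have hzero ν (h : ((ν i).count t : ℚ) * (splitCoeff (t ::ₘ μ) ν * F ν) ≠ 0) : t ∈ ν i :=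
      Multiset.count_ne_zero.1 (Nat.cast_ne_zero.1 (left_ne_zero_of_mul h))
    rw [← Finset.sum_filter_of_ne fun ν _ => hzero ν, ← sum_piAntidiag_update_cons,
      Finset.mul_sum]
    refine Finset.sum_congr rfl fun ν _ => ?_
    rw [Function.update_self, ← mul_assoc, ← mul_assoc, splitCoeff_update_cons ht]
  refine mul_left_cancel₀ hcount ?_
  rw [Finset.mul_sum, Finset.sum_congr rfl fun i _ => hterm i, Finset.sum_comm, Finset.mul_sum]
  refine Finset.sum_congr rfl fun ν hν => ?_
  rw [← Finset.sum_mul, ← Nat.cast_sum, ← Multiset.count_sum', mem_piAntidiag_univ.1 hν]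

theorem prod_mnSum_update_cons (S : ι → MayaDiagram) (ν : ι → Multiset ℕ) (i : ι) {t : ℕ}
    (ht : ∀ s ∈ ν i, t ≤ s) :
    ∏ j, mnSum ((Function.update ν i (t ::ₘ ν i) j).sort (· ≤ ·)) (S j) =
      ∑ x ∈ (S i).removable t, (-1) ^ ((S i).between x (x - t)).card *
        ∏ j, mnSum ((ν j).sort (· ≤ ·)) (Function.update S i ((S i).move x (x - t)) j) := by
  rw [prod_apply_update (fun j ν => mnSum (ν.sort (· ≤ ·)) (S j)) ν, Multiset.sort_cons t _ _ ht,
    mnSum, Finset.sum_mul]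
  refine Finset.sum_congr rfl fun x _ => ?_
  rw [prod_apply_update (fun j S => mnSum ((ν j).sort (· ≤ ·)) S) S, mul_assoc]

theorem mnSumFamily_eq_sum {l : List ℕ} (hpos : ∀ t ∈ l, t ≠ 0) (hsorted : l.Pairwise (· ≤ ·))
    (S : ι → MayaDiagram) : (mnSumFamily l S : ℚ) =
      ∑ ν ∈ Finset.univ.piAntidiag (l : Multiset ℕ),
        splitCoeff l ν * (∏ i, mnSum ((ν i).sort (· ≤ ·)) (S i) : ℤ) := by
  induction l generalizing S with
  | nil =>
    have hzpart : zpart 0 = 1 := rfl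
    simp only [Multiset.coe_nil, Finset.piAntidiag_zero, Finset.sum_singleton, splitCoeff,
      Pi.zero_apply, hzpart, Nat.cast_one, Finset.prod_const_one, div_one, one_mul,
      Multiset.sort_zero, mnSumFamily]
  | cons t l ih =>
    rw [List.forall_mem_cons] at hpos
    rw [List.pairwise_cons] at hsorted
    rw [← Multiset.cons_coe, ← sum_splitCoeff_mul_update_cons hpos.1, mnSumFamily, Int.cast_sum]
    refine Finset.sum_congr rfl fun i _ => ?_
    simp only [Int.cast_sum, Int.cast_mul, ih hpos.2 hsorted.2, Finset.mul_sum]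
    rw [Finset.sum_comm]
    refine Finset.sum_congr rfl fun ν hν => ?_
    rw [prod_mnSum_update_cons S ν i fun s hs =>
      hsorted.1 s (Multiset.mem_of_le (le_of_mem_piAntidiag_univ hν i) hs)]
    simp only [Int.cast_sum, Int.cast_mul, Finset.mul_sum]
    exact Finset.sum_congr rfl fun x _ => mul_left_comm _ _ _

end Splittings

section ZeroPermutation

theorem IsStep.le {P R : Partition} {t : ℕ} (h : IsStep P R t) : R ≤ P := by
  rcases h with ⟨-, rfl⟩ | ⟨-, h⟩
  · exact fun _ => le_rfl
  · exact h.1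

theorem RHT.chain_le {P : Partition} {μ : List ℕ} (T : RHT P μ) (j : Fin (μ.length + 1)) :
    T.chain j ≤ P := by
  induction j using Fin.reverseInduction with
  | last =>
    rw [T.chain_last]
    exact fun _ => le_rfl
  | cast j ih => exact fun n => ((T.step j).le n).trans (ih n)

theorem cycleFun_self (m n : ℕ) : cycleFun m m n = n := by
  simp only [cycleFun]
  split_ifs <;> omega

theorem coe_cycleIcc_inv_apply {L : ℕ} {i j : Fin L} (hij : i ≤ j) (n : Fin L) :
    ((Fin.cycleIcc i j)⁻¹ n : ℕ) = cycleFun i j n := by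
  have : NeZero L := ⟨(Fin.pos i).ne'⟩
  obtain ⟨l, rfl⟩ := (Fin.cycleIcc i j).surjective n
  rw [Equiv.Perm.inv_def, Equiv.symm_apply_apply]
  rcases lt_or_ge l i with hl | hl
  · rw [Fin.cycleIcc_of_lt hl, cycleFun]
    split_ifs <;> omega
  rcases lt_trichotomy l j with hlj | rfl | hlj
  · have hval : ((l + 1 : Fin L) : ℕ) = l + 1 := Fin.val_add_one_of_lt' (by omega)
    rw [Fin.cycleIcc_of_ge_of_lt hl hlj, cycleFun, hval]
    split_ifs <;> omega
  · rw [Fin.cycleIcc_of_last hij, cycleFun, if_pos rfl]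
  · rw [Fin.cycleIcc_of_gt hlj, cycleFun]
    split_ifs <;> omega

variable {A B : Partition} {f g : ℕ → ℕ}

theorem StepTrack.eq_or_isRowShift (h : StepTrack A B f g) (hBA : B ≤ A) :
    (A = B ∧ g = f) ∨ ∃ m m', IsRowShift A B m m' ∧ g = fun i => cycleFun m m' (f i) := by
  rcases h with h | ⟨m, m', hle, habove, hbetween, hbelow, rfl⟩
  · exact .inl h
  by_cases hAB : A = B
  · refine .inl ⟨hAB, ?_⟩
    obtain rfl : m = m' := by
      by_contra hne
      have := hbetween m le_rfl (by omega)
      exact (zpos_strictAnti A (Nat.lt_add_one m)).ne' (hAB ▸ this)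
    simp only [cycleFun_self]
  · refine .inr ⟨m, m', ⟨hle, habove, hbetween, hbelow, ?_⟩, rfl⟩
    rcases hle.eq_or_lt with rfl | hlt
    · refine lt_of_le_of_ne ?_ fun heq => hAB (Partition.ext fun n => ?_)
      · have := hBA m
        simp only [zpos]
        omega
      · have hn : zpos B n = zpos A n := by
          rcases lt_trichotomy n m with hn | rfl | hn
          exacts [habove n hn, heq, hbelow n hn]
        simp only [zpos] at hn
        omega
    · obtain ⟨n, rfl⟩ := Nat.exists_eq_add_of_lt hlt
      calc zpos B (m + n + 1) < zpos B (m + n) := zpos_strictAnti B (Nat.lt_add_one _)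
        _ = zpos A (m + n + 1) := hbetween _ (by omega) (by omega)
        _ < zpos A m := zpos_strictAnti A hlt

theorem StepTrack.exists_perm {L : ℕ} (h : StepTrack A B f g) (hBA : B ≤ A) (hL : A.length ≤ L) :
    ∃ τ : Equiv.Perm (Fin L), Equiv.Perm.sign τ = (-1) ^ (rowCount (A.skew B) - 1) ∧
      ∀ i (n : Fin L), f i = n → g i = τ n := by
  rcases h.eq_or_isRowShift hBA with ⟨rfl, rfl⟩ | ⟨m, m', hshift, rfl⟩
  · refine ⟨1, ?_, fun _ _ h => h⟩
    have hempty : A.skew A = ∅ := Set.sdiff_self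
    rw [hempty, rowCount, Set.image_empty, Set.ncard_empty, pow_zero, map_one]
  · have hle := hshift.le
    have hm' : m' < L := by
      by_contra hL'
      have := (hshift.parts_lt_iff (n := m')).2 ⟨hle, le_rfl⟩
      rw [A.parts_eq_zero_iff.2 (by omega)] at this
      exact Nat.not_lt_zero _ this
    have hij : (⟨m, by omega⟩ : Fin L) ≤ ⟨m', hm'⟩ := hle
    refine ⟨(Fin.cycleIcc ⟨m, by omega⟩ ⟨m', hm'⟩)⁻¹, ?_, fun i n hn => ?_⟩
    · rw [Equiv.Perm.sign_inv, Fin.sign_cycleIcc_of_le hij, hshift.rowCount_skew]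
      congr 1
      change m' - m = _
      omega
    · rw [coe_cycleIcc_inv_apply hij, ← hn]

variable {P : Partition} {μ : List ℕ} {π : Equiv.Perm (Fin P.length)}

/-- The label at each stage is read off from row `i.rev`, because labels are counted from the
left and rows from the top. -/
theorem IsZeroPerm.sign_eq {T : RHT P μ} (hπ : IsZeroPerm T π) :
    Equiv.Perm.sign π = (-1) ^ T.height := by
  obtain ⟨q, hlast, hstep, hzero⟩ := hπ
  have hrev (i : Fin P.length) : P.length - 1 - (i : ℕ) = i.rev := by rw [Fin.val_rev]; omega
  choose τ hsign hτ using fun j => (hstep j).exists_perm (T.step j).le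
    (Partition.length_le_length (T.chain_le j.succ))
  have hperm : ∀ j, ∃ σ : Equiv.Perm (Fin P.length), ∀ i : Fin P.length, q j i = σ i.rev := by
    intro j
    induction j using Fin.reverseInduction with
    | last => exact ⟨1, fun i => (hlast i i.2).trans (hrev i)⟩
    | cast j ih =>
      obtain ⟨σ, hσ⟩ := ih
      exact ⟨τ j * σ, fun i => hτ j i _ (hσ i)⟩
  choose σ hσ using hperm
  have hσlast : σ (Fin.last _) = 1 := Equiv.ext fun i => Fin.ext <| by
    rw [← i.rev_rev, ← hσ, hlast _ i.rev.2, hrev, Equiv.Perm.one_apply]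
  have hσzero : σ 0 * Fin.revPerm * π = Fin.revPerm := Equiv.ext fun i => Fin.ext <| by
    rw [Fin.revPerm_apply, ← hrev, ← hzero, hσ, Equiv.Perm.mul_apply, Equiv.Perm.mul_apply,
      Fin.revPerm_apply]
  have hσstep (j) : σ j.castSucc = τ j * σ j.succ := Equiv.ext fun i => Fin.ext <| by
    rw [← i.rev_rev, ← hσ, Equiv.Perm.mul_apply]
    exact hτ j _ _ (hσ j.succ _)
  have hprod := prod_fin_succ_div_castSucc fun j => Equiv.Perm.sign (σ j)
  rw [hσlast, Equiv.Perm.sign_one] at hprod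
  have hπ₀ : Equiv.Perm.sign (σ 0) * Equiv.Perm.sign π = 1 := by
    have := congrArg Equiv.Perm.sign hσzero
    rwa [Equiv.Perm.sign_mul, Equiv.Perm.sign_mul, mul_right_comm, mul_eq_right] at this
  rw [eq_inv_of_mul_eq_one_right hπ₀, RHT.height, ← Finset.prod_pow_eq_pow_sum, ← one_div,
    ← hprod]
  refine Finset.prod_congr rfl fun j _ => ?_
  rw [hσstep, Equiv.Perm.sign_mul, div_mul_cancel_right, hsign, Int.units_inv_eq_self]

theorem mem_zeros_of_lt {n : ℕ} (hn : P.length ≤ n) {z : ℤ} (hz : z < -n) : z ∈ P.zeros := by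
  obtain ⟨l, rfl⟩ : ∃ l : ℕ, z = -l - 1 := ⟨(-z - 1).toNat, by omega⟩
  refine ⟨l, ?_⟩
  rw [zpos, P.parts_eq_zero_iff.2 (by omega)]
  ring

/-- A hook of length `k` moves a zero to the next position on its runner, so it has height zero
there. -/
theorem IsRimHook.neg_one_pow_rowCount {k n : ℕ} {R : Partition} (hk : 0 < k)
    (h : IsRimHook P R k) (hn : P.length ≤ n) :
    (-1) ^ (rowCount (P.skew R) - 1) = runnerSign k (-n) P.zeros * runnerSign k (-n) R.zeros := by
  obtain ⟨x, hx, hR⟩ := (isRimHook_iff hk).1 h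
  rw [rowCount_skew_sub_one hk hx hR]
  obtain ⟨i, j, rfl⟩ := exists_runnerPos_eq hk x
  have hempty : (P.zeros.runner i).between j (j - (1 : ℕ)) = ∅ := by
    ext z
    simp only [mem_between, Finset.notMem_empty, iff_false]
    omega
  have hsign := neg_one_pow_card_between (fun z => mem_zeros_of_lt hn)
    (runnerPos_mem_removable.1 (by rwa [mul_one]))
  rwa [hempty, Finset.card_empty, pow_zero, mul_one, runnerPos_sub, mul_one, ← hR] at hsign

theorem RHT.neg_one_pow_height {k p n : ℕ} (hk : 0 < k) (T : RHT P (List.replicate p k))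
    (hn : P.length ≤ n) :
    (-1) ^ T.height = runnerSign k (-n) P.zeros * runnerSign k (-n) vacuum := by
  have hhook (j : Fin _) : IsRimHook (T.chain j.succ) (T.chain j.castSucc) k := by
    have := T.step j
    rw [List.get_eq_getElem, List.getElem_replicate] at this
    exact (this.resolve_left fun h => hk.ne' h.1).2
  have hprod := prod_fin_succ_div_castSucc fun j => runnerSign k (-n) (T.chain j).zeros
  rw [T.chain_last, T.chain_zero, Partition.zeros_empty] at hprod
  rw [RHT.height, ← Finset.prod_pow_eq_pow_sum, ← Int.units_div_eq_mul, ← hprod]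
  refine Finset.prod_congr rfl fun j _ => ?_
  rw [(hhook j).neg_one_pow_rowCount hk
    ((Partition.length_le_length (T.chain_le j.succ)).trans hn), Int.units_div_eq_mul]

end ZeroPermutation

section Quotient

variable {k : ℕ} {P : Partition}

theorem eq_zero_of_mem_zeros_iff_add_neg {d : ℤ} (h : ∀ j, j ∈ P.zeros ↔ j + d < 0) : d = 0 := by
  let f : ℕ → ℤ := fun n => n + 1 + d
  have hf : StrictMono f := fun m n hmn => by simp only [f]; omega
  have hrange : Set.range (-zpos P) = Set.range f := by
    ext x
    have hx := h (-x)
    simp only [Partition.mem_zeros, isZeroAt] at hx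
    simp only [Set.mem_range, Pi.neg_apply, neg_eq_iff_eq_neg, hx, f]
    exact ⟨fun hlt => ⟨(x - 1 - d).toNat, by omega⟩, fun ⟨n, hn⟩ => by omega⟩
  have hzpos := ((zpos_strictAnti P).neg.range_inj hf).1 hrange
  obtain ⟨N, hN⟩ := eventually_zpos_eq P
  have hfN : -zpos P N = N + 1 + d := congrFun hzpos N
  rw [hN N le_rfl] at hfN
  omega

theorem IsRimHook.exists_zeros_translate_runner (hk : 0 < k) {A B : Partition}
    (hAB : IsRimHook A B k) {i : Fin k} {d : ℤ}
    (hA : ∃ R : Partition, ∀ j, j ∈ R.zeros ↔ j + d ∈ A.zeros.runner i) :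
    ∃ R : Partition, ∀ j, j ∈ R.zeros ↔ j + d ∈ B.zeros.runner i := by
  obtain ⟨R, hR⟩ := hA
  obtain ⟨x, hx, hB⟩ := (isRimHook_iff hk).1 hAB
  obtain ⟨i', l, rfl⟩ := exists_runnerPos_eq hk x
  have hl : l ∈ (A.zeros.runner i').removable 1 := runnerPos_mem_removable.1 (by rwa [mul_one])
  have hpos := runnerPos_sub i' l 1
  rw [mul_one] at hpos
  rw [hB, ← hpos, runner_move]
  rcases eq_or_ne i i' with rfl | hi
  · rw [mem_removable] at hl
    have hlR : l - d ∈ R.zeros.removable 1 := by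
      rw [mem_removable, hR, hR, sub_add_cancel, sub_right_comm, sub_add_cancel]
      exact hl
    obtain ⟨R', hR'⟩ := exists_zeros_eq_move one_pos hlR
    refine ⟨R', fun j => ?_⟩
    rw [hR', Function.update_self, mem_move, mem_move, hR]
    grind
  · exact ⟨R, fun j => by rw [Function.update_of_ne hi, hR]⟩

/-- Removing `k`-hooks from `P` removes `1`-hooks from its quotient without changing the shift `d`
of each runner, and for the empty partition this shift is zero. -/
theorem IsKQuotient.zeros_eq_runner (hk : 0 < k) {Q : Fin k → Partition} (hQ : IsKQuotient k P Q)
    (hcore : IsKCore k P Partition.empty) (i : Fin k) : (Q i).zeros = P.zeros.runner i := by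
  obtain ⟨d, hd⟩ := hQ i
  have htranslate {A : Partition} (hPA : Relation.ReflTransGen (fun A B => IsRimHook A B k) P A) :
      ∃ R : Partition, ∀ j, j ∈ R.zeros ↔ j + d ∈ A.zeros.runner i := by
    induction hPA with
    | refl => exact ⟨Q i, hd⟩
    | tail _ hstep ih => exact hstep.exists_zeros_translate_runner hk ih
  obtain ⟨R, hR⟩ := htranslate hcore.1
  simp only [Partition.zeros_empty, runner_vacuum, mem_vacuum] at hR
  obtain rfl := eq_zero_of_mem_zeros_iff_add_neg hR
  ext j
  have hj := hd j
  rwa [add_zero] at hj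

end Quotient

section Littlewood

theorem chi_map_mul_eq_sum {k n : ℕ} (hk : 0 < k) {P : Partition} (hn : P.length ≤ n)
    {Q : Fin k → Partition} (hQ : ∀ i, (Q i).zeros = P.zeros.runner i) {μ : Multiset ℕ}
    (hμ : ∀ t ∈ μ, 0 < t) :
    (chi P (μ.map fun x => k * x) : ℚ) =
      ((runnerSign k (-n) P.zeros * runnerSign k (-n) vacuum : ℤˣ) : ℤ) *
        ∑ ν ∈ Finset.univ.piAntidiag μ, splitCoeff μ ν * ∏ i, (chi (Q i) (ν i) : ℚ) := by
  have hpos : ∀ t ∈ μ.map fun x => k * x, 0 < t := fun t ht => by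
    obtain ⟨x, hx, rfl⟩ := Multiset.mem_map.1 ht
    exact Nat.mul_pos hk (hμ x hx)
  have hsort : (μ.map fun x => k * x).sort (· ≤ ·) = (μ.sort (· ≤ ·)).map fun x => k * x :=
    (Multiset.map_sort (fun x => k * x) μ (· ≤ ·) (· ≤ ·)
      fun _ _ _ _ => (Nat.mul_le_mul_left_iff hk).symm).symm
  rw [chi_eq_mnSum P hpos, hsort, mnSum_map_mul hk _ fun z => mem_zeros_of_lt hn, Int.cast_mul,
    mnSumFamily_eq_sum (fun t ht => (hμ t ((Multiset.mem_sort _).1 ht)).ne')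
      (Multiset.pairwise_sort μ _), Multiset.sort_eq]
  congr 1
  refine Finset.sum_congr rfl fun ν hν => ?_
  have hchi (i) : chi (Q i) (ν i) = mnSum ((ν i).sort (· ≤ ·)) (P.zeros.runner i) :=
    hQ i ▸ chi_eq_mnSum (Q i) fun t ht =>
      hμ t (Multiset.mem_of_le (le_of_mem_piAntidiag_univ hν i) ht)
  simp only [hchi, Int.cast_prod]

/-- A splitting of `μ` into multisets of the wrong sizes contributes zero. -/
theorem sum_piAntidiag_eq_sum_partition {ι : Type*} [Fintype ι] [DecidableEq ι]
    (Q : ι → Partition) {μ : Multiset ℕ} (hμ : ∀ t ∈ μ, 0 < t) (f : (ι → Multiset ℕ) → ℚ) :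
    ∑ ν ∈ Finset.univ.piAntidiag μ, f ν * ∏ i, (chi (Q i) (ν i) : ℚ) =
      ∑ ν : (i : ι) → Nat.Partition (Q i).size, if ∑ i, (ν i).parts = μ then
        f (fun i => (ν i).parts) * ∏ i, (chi (Q i) (ν i).parts : ℚ) else 0 := by
  rw [← Finset.sum_filter]
  refine (Finset.sum_of_injOn (fun (ν : (i : ι) → Nat.Partition (Q i).size) i => (ν i).parts)
    (fun ν _ ν' _ h => funext fun i => Nat.Partition.ext (congrFun h i))
    (fun ν hν => ?_) (fun ν hν hnot => ?_) fun _ _ => rfl).symm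
  · exact mem_piAntidiag_univ.2 (Finset.mem_filter.1 (Finset.mem_coe.1 hν)).2
  · by_contra hne
    have hchi (i) : chi (Q i) (ν i) ≠ 0 := Int.cast_ne_zero.1
      (Finset.prod_ne_zero_iff.1 (right_ne_zero_of_mul hne) i (Finset.mem_univ i))
    have hpos (i) {t : ℕ} (ht : t ∈ ν i) : 0 < t :=
      hμ t (Multiset.mem_of_le (le_of_mem_piAntidiag_univ hν i) ht)
    refine hnot ⟨fun i => ⟨ν i, hpos i, sum_eq_size_of_chi_ne_zero (hchi i)⟩, ?_, rfl⟩
    exact Finset.mem_coe.2 (Finset.mem_filter.2 ⟨Finset.mem_univ _, mem_piAntidiag_univ.1 hν⟩)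

end Littlewood

/-- Littlewood's reduction formula: let `λ ⊢ kp`. If
`core_k(λ) ≠ ∅` then `χ^λ_{kμ} = 0` for every `μ ⊢ p`. If `core_k(λ) = ∅` with
`k`-quotient `(λ₁,…,λ_k)`, then for every `μ ⊢ p`:
`χ^λ_{kμ} = sign(π_λ) · Σ (z_μ/(z_{μ₁}⋯z_{μ_k})) ∏ᵢ χ^{λᵢ}_{μᵢ}`, summed over all
`k`-tuples `(μ₁,…,μ_k)` with `μᵢ ⊢ |λᵢ|` and `μ₁ ⊕ ⋯ ⊕ μ_k = μ`. -/
theorem littlewood_reduction (k p : ℕ) (hk : 2 ≤ k) (P : Partition)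
    (hP : P.size = k * p) :
    ((∀ C : Partition, IsKCore k P C → C ≠ Partition.empty) →
      ∀ μ : Nat.Partition p, chi P (μ.parts.map fun x => k * x) = 0) ∧
    (∀ Q : Fin k → Partition, IsKCore k P Partition.empty → IsKQuotient k P Q →
      ∀ (T₀ : RHT P (List.replicate p k)) (π : Equiv.Perm (Fin P.length)),
        IsZeroPerm T₀ π →
        ∀ μ : Nat.Partition p,
          (chi P (μ.parts.map fun x => k * x) : ℚ) =
            ((Equiv.Perm.sign π : ℤ) : ℚ) *
              ∑ ν : (i : Fin k) → Nat.Partition (Q i).size,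
                if (∑ i : Fin k, (ν i).parts) = μ.parts then
                  ((zpart μ.parts : ℚ) / ∏ i : Fin k, (zpart (ν i).parts : ℚ)) *
                    ∏ i : Fin k, (chi (Q i) (ν i).parts : ℚ)
                else 0) := by
  have hk₀ : 0 < k := by omega
  constructor
  · intro hcore μ
    by_contra hne
    exact hcore _ (isKCore_empty_of_chi_ne_zero hk₀ hne) rfl
  · intro Q hcore hQ T₀ π hπ μ
    have hsign : Equiv.Perm.sign π =
        runnerSign k (-P.length) P.zeros * runnerSign k (-P.length) vacuum :=
      hπ.sign_eq.trans (T₀.neg_one_pow_height hk₀ le_rfl)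
    have hμ : ∀ t ∈ μ.parts, 0 < t := fun _ => μ.parts_pos
    rw [chi_map_mul_eq_sum hk₀ le_rfl (hQ.zeros_eq_runner hk₀ hcore) hμ, ← hsign,
      sum_piAntidiag_eq_sum_partition Q hμ]
    simp only [splitCoeff]

end RimHookPaper
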